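/- Each entry of P_n is a polynomial of degree at most n, and the coefficient of x^n in P_n is the nonsingular diagonal matrix whose (i,i)-entry equals 2^n q^n (q^{2i+2};q²)_n (q^{4ℓ-2i+2};q²)_n / ((q²;q²)_n (q^{4ℓ+4};q²)_n); in particular P_n is a matrix-valued polynomial of degree exactly n with nonsingular leading coefficient. -/

import Mathlib

open Finset Polynomial MeasureTheory Matrix
open scoped BigOperators ComplexOrder

noncomputable section

/-- q-shifted factorial `(a;p)_n`. -/
def qp (a p : ℂ) (n : ℕ) : ℂ := ∏ j ∈ Finset.range n, (1 - a * p ^ j)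

/-- q-Racah polynomial `R_n(μ(x);α,β,γ,δ;p)`. -/
def qRacah (p α β γ δ : ℂ) (n x : ℕ) : ℂ :=
  ∑ k ∈ Finset.range (min n x + 1),
    qp (p ^ (-(n : ℤ))) p k * qp (α * β * p ^ (n + 1)) p k *
        qp (p ^ (-(x : ℤ))) p k * qp (γ * δ * p ^ (x + 1)) p k /
      (qp (α * p) p k * qp (β * δ * p) p k * qp (γ * p) p k * qp p p k) * p ^ k

/-- `IsUltra C` says that for each base `p`, parameter `β` and degree `n`, `C p β n` is
the continuous q-ultraspherical polynomial: it has degree at most `n` and its values at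
`(z+z⁻¹)/2` are given by the symmetric Laurent sum. -/
def IsUltra (C : ℂ → ℂ → ℕ → Polynomial ℂ) : Prop :=
  ∀ (p β : ℂ) (n : ℕ),
    (C p β n).degree ≤ (n : ℕ) ∧
      ∀ z : ℂ, z ≠ 0 →
        (C p β n).eval ((z + z⁻¹) / 2) =
          ∑ r ∈ Finset.range (n + 1),
            qp β p r * qp β p (n - r) / (qp p p r * qp p p (n - r)) * z ^ ((n : ℤ) - 2 * r)

/-- The matrix-valued polynomial `P_n` (entries in `Polynomial ℂ`); here `L = 2ℓ`. -/
def Pm (q : ℂ) (L : ℕ) (C : ℂ → ℂ → ℕ → Polynomial ℂ) (n : ℕ) :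
    Matrix (Fin (L + 1)) (Fin (L + 1)) (Polynomial ℂ) :=
  Matrix.of fun i j =>
    ∑ k ∈ Finset.Icc (i : ℕ) (min L (n + (j : ℕ))),
      Polynomial.C
          ((-1 : ℂ) ^ k *
            q ^ ((n : ℤ) + (2 * (k : ℤ) + 1) * ((k : ℤ) - ((i : ℕ) : ℤ)) +
                ((j : ℕ) : ℤ) * (2 * (k : ℤ) + 1) + 2 * (k : ℤ) * ((L : ℤ) + (n : ℤ) + 1) -
                (k : ℤ) ^ 2) *
            (qp (q ^ 2) (q ^ 2) k * qp (q ^ 2) (q ^ 2) (k + (i : ℕ)) /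
              (qp (q ^ 2) (q ^ 2) (2 * k) * qp (q ^ 2) (q ^ 2) (i : ℕ))) *
            (qp (q ^ (-(2 * (L : ℤ)))) (q ^ 2) k *
                qp (q ^ (-(2 * ((j : ℕ) : ℤ) + 2 * (n : ℤ)))) (q ^ 2) k /
              (qp (q ^ 2) (q ^ 2) k * qp (q ^ (2 * (L : ℤ) + 4)) (q ^ 2) k)) *
            (qp (q ^ 2) (q ^ 2) (n + (j : ℕ) - k) /
              qp (q ^ (4 * (k : ℤ) + 4)) (q ^ 2) (n + (j : ℕ) - k)) *
            qRacah (q ^ 2) 1 1 (q ^ (-(2 * (n : ℤ) + 2 * ((j : ℕ) : ℤ) + 2)))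
              (q ^ (-(2 * (L : ℤ) + 2))) k (j : ℕ)) *
        (C (q ^ 2) (q ^ (-(2 * (k : ℤ)))) (k - (i : ℕ)) *
          C (q ^ 2) (q ^ (2 * (k : ℤ) + 2)) (n + (j : ℕ) - k))

/-- Evaluation of the matrix-valued polynomial `P_n` at a point. -/
def evP (q : ℂ) (L : ℕ) (C : ℂ → ℂ → ℕ → Polynomial ℂ) (n : ℕ) (x : ℂ) :
    Matrix (Fin (L + 1)) (Fin (L + 1)) ℂ :=
  (Pm q L C n).map (Polynomial.eval x)

/-- The coefficients `α_t(m,n)` of the weight. -/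
def alphaC (q : ℂ) (L m n t : ℕ) : ℂ :=
  q ^ (2 * (n : ℤ) * ((L : ℤ) + 1) - (n : ℤ) ^ 2 - (2 * (L : ℤ) + 3) * (t : ℤ) + (t : ℤ) ^ 2 -
      (L : ℤ) + (m : ℤ)) *
    ((1 - q ^ (2 * (L : ℤ) + 2)) / (1 - q ^ (2 * (m : ℤ) + 2))) *
    (qp (q ^ 2) (q ^ 2) (L - n) * qp (q ^ 2) (q ^ 2) n / qp (q ^ 2) (q ^ 2) L) *
    ((-1 : ℂ) ^ ((m : ℤ) - (t : ℤ)) * qp (q ^ (2 * (m : ℤ) - 2 * (L : ℤ))) (q ^ 2) (n - t) /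
      qp (q ^ (2 * (m : ℤ) + 4)) (q ^ 2) (n - t)) *
    (qp (q ^ (2 * (L : ℤ) + 4 - 2 * (t : ℤ))) (q ^ 2) t / qp (q ^ 2) (q ^ 2) t)

/-- The matrix weight `W(x)`. -/
def Wm (q : ℂ) (L : ℕ) (x : ℂ) : Matrix (Fin (L + 1)) (Fin (L + 1)) ℂ :=
  Matrix.of fun i j =>
    ∑ t ∈ Finset.range (max (i : ℕ) (j : ℕ) + 1),
      alphaC q L (min (i : ℕ) (j : ℕ)) (max (i : ℕ) (j : ℕ)) t *
        (Polynomial.Chebyshev.U ℂ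
            ((min (i : ℕ) (j : ℕ) : ℤ) + (max (i : ℕ) (j : ℕ) : ℤ) - 2 * (t : ℤ))).eval x

/-- The antidiagonal involution `J`. -/
def Jm (L : ℕ) : Matrix (Fin (L + 1)) (Fin (L + 1)) ℂ :=
  Matrix.of fun i j => if (i : ℕ) + (j : ℕ) = L then 1 else 0

/-- The diagonal leading-coefficient matrix `Γ_n`. -/
def Gam (q : ℂ) (L n : ℕ) : Matrix (Fin (L + 1)) (Fin (L + 1)) ℂ :=
  Matrix.diagonal fun i =>
    2 ^ n * q ^ n * qp (q ^ (2 * ((i : ℕ) : ℤ) + 2)) (q ^ 2) n *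
        qp (q ^ (2 * (L : ℤ) - 2 * ((i : ℕ) : ℤ) + 2)) (q ^ 2) n /
      (qp (q ^ 2) (q ^ 2) n * qp (q ^ (2 * (L : ℤ) + 4)) (q ^ 2) n)

/-- The squared-norm matrix `G_m`. -/
def Gmat (q : ℂ) (L m : ℕ) : Matrix (Fin (L + 1)) (Fin (L + 1)) ℂ :=
  Matrix.diagonal fun i =>
    q ^ (2 * (m : ℤ) - (L : ℤ)) * (1 - q ^ (2 * (L : ℤ) + 2)) ^ 2 /
      ((1 - q ^ (2 * (m : ℤ) + 2 * ((i : ℕ) : ℤ) + 2)) *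
        (1 - q ^ (2 * (L : ℤ) - 2 * ((i : ℕ) : ℤ) + 2 * (m : ℤ) + 2)))

/-- The unipotent lower triangular matrix `L(x)` of the LDU decomposition. -/
def Lm (q : ℂ) (L : ℕ) (C : ℂ → ℂ → ℕ → Polynomial ℂ) (x : ℂ) :
    Matrix (Fin (L + 1)) (Fin (L + 1)) ℂ :=
  Matrix.of fun m k =>
    if (k : ℕ) ≤ (m : ℕ) then
      q ^ (((m : ℕ) : ℤ) - ((k : ℕ) : ℤ)) * qp (q ^ 2) (q ^ 2) (m : ℕ) *
          qp (q ^ 2) (q ^ 2) (2 * (k : ℕ) + 1) /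
          (qp (q ^ 2) (q ^ 2) ((m : ℕ) + (k : ℕ) + 1) * qp (q ^ 2) (q ^ 2) (k : ℕ)) *
        (C (q ^ 2) (q ^ (2 * (k : ℕ) + 2)) ((m : ℕ) - (k : ℕ))).eval x
    else 0

/-- The claimed inverse of `L(x)`. -/
def Linv (q : ℂ) (L : ℕ) (C : ℂ → ℂ → ℕ → Polynomial ℂ) (x : ℂ) :
    Matrix (Fin (L + 1)) (Fin (L + 1)) ℂ :=
  Matrix.of fun k n =>
    if (n : ℕ) ≤ (k : ℕ) then
      q ^ ((2 * ((k : ℕ) : ℤ) + 1) * (((k : ℕ) : ℤ) - ((n : ℕ) : ℤ))) *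
          qp (q ^ 2) (q ^ 2) (k : ℕ) * qp (q ^ 2) (q ^ 2) ((k : ℕ) + (n : ℕ)) /
          (qp (q ^ 2) (q ^ 2) (2 * (k : ℕ)) * qp (q ^ 2) (q ^ 2) (n : ℕ)) *
        (C (q ^ 2) (q ^ (-(2 * ((k : ℕ) : ℤ)))) ((k : ℕ) - (n : ℕ))).eval x
    else 0

/-- The constants `c_k(ℓ)`. -/
def ckC (q : ℂ) (L k : ℕ) : ℂ :=
  q ^ (-(L : ℤ)) / 4 * (1 - q ^ (4 * k + 2)) * qp (q ^ 2) (q ^ 2) (L + k + 1) *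
      qp (q ^ 2) (q ^ 2) (L - k) * qp (q ^ 2) (q ^ 2) k ^ 4 /
    (qp (q ^ 2) (q ^ 2) (2 * k + 1) ^ 2 * qp (q ^ 2) (q ^ 2) L ^ 2)

/-- The diagonal part `T(x)` of the LDU decomposition. -/
def Tm (q : ℂ) (L : ℕ) (x : ℂ) : Matrix (Fin (L + 1)) (Fin (L + 1)) ℂ :=
  Matrix.diagonal fun k =>
    ckC q L (k : ℕ) *
      (4 * ∏ j ∈ Finset.Icc 1 (k : ℕ), (1 - 2 * (2 * x ^ 2 - 1) * q ^ (2 * j) + q ^ (4 * j)))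

/-- The coefficient matrix `M₁(z)` of the q-difference operator `D₁`. -/
def M1f (q : ℂ) (L : ℕ) (z : ℂ) : Matrix (Fin (L + 1)) (Fin (L + 1)) ℂ :=
  Matrix.of fun i j =>
    if (j : ℕ) = (i : ℕ) + 1 then
      -(q ^ (1 - ((i : ℕ) : ℤ)) * (1 - q ^ (2 * (i : ℕ) + 2)) / (1 - q ^ 2) ^ 2 *
        (z / (1 - z ^ 2)))
    else if (j : ℕ) = (i : ℕ) then
      q ^ (1 - ((i : ℕ) : ℤ)) / (1 - q ^ 2) ^ 2 *
        ((1 - q ^ (2 * (i : ℕ) + 2) * z ^ 2) / (1 - z ^ 2))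
    else 0

/-- `M₂(z) = J M₁(z) J`. -/
def M2f (q : ℂ) (L : ℕ) (z : ℂ) : Matrix (Fin (L + 1)) (Fin (L + 1)) ℂ :=
  Jm L * M1f q L z * Jm L

/-- The eigenvalue matrix `Λ_n(1)`. -/
def Lam1 (q : ℂ) (L n : ℕ) : Matrix (Fin (L + 1)) (Fin (L + 1)) ℂ :=
  Matrix.diagonal fun j =>
    (q ^ (-((j : ℕ) : ℤ) - (n : ℤ) - 1) + q ^ (((j : ℕ) : ℤ) + (n : ℤ) + 1)) / (q⁻¹ - q) ^ 2

/-- The eigenvalue matrix `Λ_n(2) = J Λ_n(1) J`. -/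
def Lam2 (q : ℂ) (L n : ℕ) : Matrix (Fin (L + 1)) (Fin (L + 1)) ℂ :=
  Jm L * Lam1 q L n * Jm L

/-- The diagonal coefficient matrix `K₁(z)` of the decoupled operator. -/
def K1f (q : ℂ) (L : ℕ) (z : ℂ) : Matrix (Fin (L + 1)) (Fin (L + 1)) ℂ :=
  Matrix.diagonal fun i =>
    q ^ (1 - ((i : ℕ) : ℤ)) / (1 - q ^ 2) ^ 2 *
      ((1 - q ^ (2 * (i : ℕ) + 2) * z ^ 2) / (1 - z ^ 2))

/-- The symmetric Laurent polynomial `Ĉ_k(z;β|p)`. -/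
def Chat (p β : ℂ) (k : ℕ) (z : ℂ) : ℂ :=
  ∑ r ∈ Finset.range (k + 1),
    qp β p r * qp β p (k - r) / (qp p p r * qp p p (k - r)) * z ^ ((k : ℤ) - 2 * (r : ℤ))

/-- The matrix polynomials `R_n(x) = L(x)ᵀ P_n(x) Γ_n⁻¹`. -/
def Rmat (q : ℂ) (L : ℕ) (C : ℂ → ℂ → ℕ → Polynomial ℂ) (n : ℕ) (x : ℂ) :
    Matrix (Fin (L + 1)) (Fin (L + 1)) ℂ :=
  (Lm q L C x)ᵀ * evP q L C n x * (Gam q L n)⁻¹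


lemma qp_zero (a p : ℂ) : qp a p 0 = 1 := by simp [qp]

lemma qp_succ (a p : ℂ) (n : ℕ) : qp a p (n + 1) = qp a p n * (1 - a * p ^ n) := by
  simp [qp, Finset.prod_range_succ]

lemma qp_succ' (a p : ℂ) (n : ℕ) : qp a p (n + 1) = (1 - a) * qp (a * p) p n := by
  simp only [qp, Finset.prod_range_succ']
  rw [mul_comm]
  congr 1
  · simp
  · apply Finset.prod_congr rfl
    intro i _
    ring

lemma qp_ne (a p : ℂ) (n : ℕ) (h : ∀ i < n, a * p ^ i ≠ 1) : qp a p n ≠ 0 := by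
  rw [qp, Finset.prod_ne_zero_iff]
  intro i hi
  rw [sub_ne_zero]
  exact (h i (Finset.mem_range.1 hi)).symm

lemma qp_add (a p : ℂ) (m n : ℕ) : qp a p (m + n) = qp a p m * qp (a * p ^ m) p n := by
  induction n with
  | zero => simp [qp_zero]
  | succ n ih => rw [← add_assoc, qp_succ, ih, qp_succ]; ring

def ph (g p X : ℂ) (m : ℕ) : ℂ := qp X⁻¹ p m * qp (g * X * p) p m

lemma ph_zero (g p X : ℂ) : ph g p X 0 = 1 := by simp [ph, qp_zero]

lemma ph_succ (g p X : ℂ) (m : ℕ) :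
    ph g p X (m + 1) = ph g p X m * (1 - X⁻¹ * p ^ m) * (1 - g * X * p * p ^ m) := by
  simp only [ph, qp_succ]; ring

lemma ph_diff (g p X : ℂ) (hp : p ≠ 0) (hX : X ≠ 0) (m : ℕ) :
    (1 - g * X * p) * (ph g p (X * p) (m + 1) - ph g p X (m + 1)) =
      -(1 - p ^ (m + 1)) * X⁻¹ * p⁻¹ * (1 - g * X ^ 2 * p ^ 2) *
        (ph g p X m * (1 - g * X * p * p ^ m)) := by
  have h1 : ph g p (X * p) (m + 1) =
      (1 - (X * p)⁻¹) * qp X⁻¹ p m * (qp (g * X * p * p) p m * (1 - g * X * p * p * p ^ m)) := by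
    rw [ph, qp_succ', show (X * p)⁻¹ * p = X⁻¹ by field_simp, qp_succ,
      show g * (X * p) * p = g * X * p * p by ring]
  have h2 := qp_succ' (g * X * p) p m
  rw [qp_succ] at h2
  rw [h1, ph_succ, ph]
  have h3 : (1 - g * X * p) * ((1 - (X * p)⁻¹) * qp X⁻¹ p m *
      (qp (g * X * p * p) p m * (1 - g * X * p * p * p ^ m)) -
      qp X⁻¹ p m * qp (g * X * p) p m * (1 - X⁻¹ * p ^ m) * (1 - g * X * p * p ^ m)) =
      (1 - (X * p)⁻¹) * qp X⁻¹ p m * (1 - g * X * p * p * p ^ m) *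
        ((1 - g * X * p) * qp (g * X * p * p) p m) -
      (1 - g * X * p) * qp X⁻¹ p m * qp (g * X * p) p m * (1 - X⁻¹ * p ^ m) *
        (1 - g * X * p * p ^ m) := by ring
  rw [h3, ← h2]
  field_simp
  ring

lemma ph_diff' (g p X : ℂ) (hp : p ≠ 0) (hX : X ≠ 0) (m : ℕ) :
    (1 - X⁻¹) * (ph g p X (m + 1) - ph g p (X * p⁻¹) (m + 1)) =
      -(1 - p ^ (m + 1)) * X⁻¹ * (1 - g * X ^ 2) *
        (ph g p X m * (1 - X⁻¹ * p ^ m)) := by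
  have h1 : ph g p (X * p⁻¹) (m + 1) =
      (qp (X⁻¹ * p) p m * (1 - X⁻¹ * p * p ^ m)) * ((1 - g * X) * qp (g * X * p) p m) := by
    rw [ph, qp_succ, show (X * p⁻¹)⁻¹ = X⁻¹ * p by field_simp, qp_succ',
      show g * (X * p⁻¹) * p = g * X by field_simp]
  have h2 := qp_succ' X⁻¹ p m
  rw [qp_succ] at h2
  rw [h1, ph_succ, ph]
  have h3 : (1 - X⁻¹) * (qp X⁻¹ p m * qp (g * X * p) p m * (1 - X⁻¹ * p ^ m) *
      (1 - g * X * p * p ^ m) - (qp (X⁻¹ * p) p m * (1 - X⁻¹ * p * p ^ m)) *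
        ((1 - g * X) * qp (g * X * p) p m)) =
      (1 - X⁻¹) * (qp X⁻¹ p m * qp (g * X * p) p m * (1 - X⁻¹ * p ^ m) *
      (1 - g * X * p * p ^ m)) - ((1 - X⁻¹) * qp (X⁻¹ * p) p m) * (1 - X⁻¹ * p * p ^ m) *
        ((1 - g * X) * qp (g * X * p) p m) := by ring
  rw [h3, ← h2]
  field_simp
  ring

def opA (p c d X : ℂ) : ℂ := (1 - X * p) * (1 - c * X) * (1 - d * X) / ((1 + X * p) * (1 - X ^ 2 * p))
def opC (p c d X : ℂ) : ℂ :=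
  p⁻¹ * (1 - X) * (d - X * p) * (c - X * p) / ((1 + X) * (1 - X ^ 2 * p))
def Lop (p c d : ℂ) (f : ℂ → ℂ) (X : ℂ) : ℂ :=
  opA p c d X * (f (X * p) - f X) - opC p c d X * (f X - f (X * p⁻¹))
def muE (p c d : ℂ) (M : ℕ) : ℂ := -(1 - (p ^ M)⁻¹) * (1 - c * d * p ^ M * p⁻¹)
def ccE (p c d : ℂ) (m : ℕ) : ℂ :=
  -(1 - p ^ (m + 1)) ^ 2 * (p ^ (m + 1))⁻¹ * (1 - c * p ^ m) * (1 - d * p ^ m)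

lemma Lop_ph0 (p c d X : ℂ) : Lop p c d (fun X => ph 1 p X 0) X = 0 := by
  simp [Lop, ph_zero]

lemma Lop_ph (p c d X : ℂ) (hp : p ≠ 0) (hX : X ≠ 0) (h1 : 1 + X ≠ 0) (h2 : 1 + X * p ≠ 0)
    (h3 : 1 - X ^ 2 * p ≠ 0) (m : ℕ) :
    Lop p c d (fun X => ph 1 p X (m + 1)) X =
      muE p c d (m + 1) * ph 1 p X (m + 1) + ccE p c d m * ph 1 p X m := by
  have e1 := ph_diff 1 p X hp hX m
  have e2 := ph_diff' 1 p X hp hX m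
  have hA : opA p c d X * (ph 1 p (X * p) (m + 1) - ph 1 p X (m + 1)) =
      (1 - c * X) * (1 - d * X) / ((1 + X * p) * (1 - X ^ 2 * p)) *
      ((1 - 1 * X * p) * (ph 1 p (X * p) (m + 1) - ph 1 p X (m + 1))) := by
    rw [opA]; ring
  have hC : opC p c d X * (ph 1 p X (m + 1) - ph 1 p (X * p⁻¹) (m + 1)) =
      p⁻¹ * (-X) * (d - X * p) * (c - X * p) / ((1 + X) * (1 - X ^ 2 * p)) *
      ((1 - X⁻¹) * (ph 1 p X (m + 1) - ph 1 p (X * p⁻¹) (m + 1))) := by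
    rw [opC]; field_simp; ring
  simp only [Lop]
  rw [hA, hC, e1, e2, ph_succ, muE, ccE]
  have hpm : p ^ m ≠ 0 := pow_ne_zero _ hp
  simp only [pow_succ p m]
  generalize p ^ m = P at *
  generalize ph 1 p X m = F
  field_simp
  ring

def eE (p c d : ℂ) (m : ℕ) : ℂ := p ^ m / (qp p p m ^ 2 * qp c p m * qp d p m)

lemma eE_succ (p c d : ℂ) (hp : p ≠ 0) (m : ℕ) (h1 : 1 - p ^ (m + 1) ≠ 0) (h2 : 1 - c * p ^ m ≠ 0)
    (h3 : 1 - d * p ^ m ≠ 0) : eE p c d m =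
      eE p c d (m + 1) * ((1 - p ^ (m + 1)) ^ 2 * (1 - c * p ^ m) * (1 - d * p ^ m) / p) := by
  have h4 : 1 - p * p ^ m ≠ 0 := by rwa [← pow_succ']
  have h2' : 1 - p ^ m * c ≠ 0 := by rwa [mul_comm]
  have h3' : 1 - p ^ m * d ≠ 0 := by rwa [mul_comm]
  have h4' : 1 - p ^ m * p ≠ 0 := by rwa [mul_comm]
  simp only [eE, qp_succ, pow_succ' p m]
  by_cases a1 : qp p p m = 0
  · simp [a1]
  by_cases a2 : qp c p m = 0
  · simp [a2]
  by_cases a3 : qp d p m = 0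
  · simp [a3]
  field_simp

def Rf (p c d : ℂ) (j : ℕ) (X : ℂ) : ℂ :=
  ∑ m ∈ Finset.range (j + 1), eE p c d m * ph (c * d / p ^ 2) p (p ^ j) m * ph 1 p X m

lemma Lop_sum (p c d : ℂ) (s : Finset ℕ) (a : ℕ → ℂ) (f : ℕ → ℂ → ℂ) (X : ℂ) :
    Lop p c d (fun X => ∑ m ∈ s, a m * f m X) X = ∑ m ∈ s, a m * Lop p c d (f m) X := by
  simp only [Lop, ← Finset.sum_sub_distrib, Finset.mul_sum]
  apply Finset.sum_congr rfl
  intros; ring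

lemma ph_top (g p : ℂ) (hp : p ≠ 0) (j : ℕ) : ph g p (p ^ j) (j + 1) = 0 := by
  have : p ^ j ≠ 0 := pow_ne_zero _ hp
  rw [ph_succ, inv_mul_cancel₀ this]; simp

lemma ph_eq_zero (g p : ℂ) (hp : p ≠ 0) (j m : ℕ) (h : j < m) : ph g p (p ^ j) m = 0 := by
  induction m, h using Nat.le_induction with
  | base => exact ph_top g p hp j
  | succ m hm ih => rw [ph_succ, ih]; ring

lemma Lop_Rf (p c d X : ℂ) (hp : p ≠ 0) (hX : X ≠ 0) (h1 : 1 + X ≠ 0) (h2 : 1 + X * p ≠ 0)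
    (h3 : 1 - X ^ 2 * p ≠ 0) (j : ℕ)
    (hj : ∀ m < j, 1 - p ^ (m + 1) ≠ 0 ∧ 1 - c * p ^ m ≠ 0 ∧ 1 - d * p ^ m ≠ 0) :
    Lop p c d (Rf p c d j) X = muE p c d j * Rf p c d j X := by
  have key : ∀ K ≤ j, ∑ m ∈ Finset.range (K + 1),
      eE p c d m * ph (c * d / p ^ 2) p (p ^ j) m *
        (Lop p c d (fun X => ph 1 p X m) X - muE p c d j * ph 1 p X m) =
      eE p c d K * ph (c * d / p ^ 2) p (p ^ j) K * (muE p c d K - muE p c d j) * ph 1 p X K := by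
    intro K
    induction K with
    | zero =>
      intro _
      rw [Finset.sum_range_one, Lop_ph0]; simp [ph_zero, muE]
    | succ K ih =>
      intro hK
      rw [Finset.sum_range_succ, ih (by omega), Lop_ph p c d X hp hX h1 h2 h3]
      obtain ⟨a1, a2, a3⟩ := hj K (by omega)
      rw [eE_succ p c d hp K a1 a2 a3, ph_succ (c * d / p ^ 2) p (p ^ j) K]
      have hpm : p ^ K ≠ 0 := pow_ne_zero _ hp
      have hpj : p ^ j ≠ 0 := pow_ne_zero _ hp
      have z : (1 - p ^ (K + 1)) ^ 2 * (1 - c * p ^ K) * (1 - d * p ^ K) / p *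
          (muE p c d K - muE p c d j) + (1 - (p ^ j)⁻¹ * p ^ K) *
          (1 - c * d / p ^ 2 * p ^ j * p * p ^ K) * ccE p c d K = 0 := by
        rw [muE, muE, ccE]
        simp only [pow_succ p K]
        generalize p ^ K = P at *
        generalize p ^ j = J at *
        field_simp
        ring
      linear_combination (eE p c d (K+1) * ph (c * d / p ^ 2) p (p ^ j) K * ph 1 p X K) * z
  have k1 := key j le_rfl
  rw [sub_self, mul_zero, zero_mul] at k1
  have : Lop p c d (Rf p c d j) X = ∑ m ∈ Finset.range (j + 1),
      eE p c d m * ph (c * d / p ^ 2) p (p ^ j) m * Lop p c d (fun X => ph 1 p X m) X :=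
    Lop_sum p c d _ _ (fun m X => ph 1 p X m) X
  rw [this, ← sub_eq_zero, ← k1, Rf, Finset.mul_sum, ← Finset.sum_sub_distrib]
  apply Finset.sum_congr rfl
  intros; ring

def wt (p x y : ℂ) (k : ℕ) : ℂ :=
  (p * x * y) ^ k * (1 - p ^ (2 * k + 1)) * qp y⁻¹ p k * qp x⁻¹ p k /
    (qp (y * p ^ 2) p k * qp (x * p ^ 2) p k)

lemma pinj (p : ℂ) (hp : p ≠ 0) (hP : ∀ m : ℕ, 0 < m → p ^ m ≠ 1) (a b : ℕ) (h : p ^ a = p ^ b) :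
    a = b := by
  rcases lt_trichotomy a b with h1 | h1 | h1
  · exfalso
    apply hP (b - a) (by omega)
    have : p ^ a * p ^ (b - a) = p ^ a * 1 := by
      rw [← pow_add, mul_one, h]; congr 1; omega
    exact mul_left_cancel₀ (pow_ne_zero _ hp) this
  · exact h1
  · exfalso
    apply hP (a - b) (by omega)
    have : p ^ b * p ^ (a - b) = p ^ b * 1 := by
      rw [← pow_add, mul_one, ← h]; congr 1; omega
    exact mul_left_cancel₀ (pow_ne_zero _ hp) this

lemma plus_ne (p : ℂ) (hP : ∀ m : ℕ, 0 < m → p ^ m ≠ 1) (k : ℕ) : 1 + p ^ k ≠ 0 := by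
  intro h
  rcases Nat.eq_zero_or_pos k with rfl | hk
  · norm_num at h
  · apply hP (k + k) (by omega)
    have : p ^ k = -1 := by linear_combination h
    rw [pow_add, this]; norm_num

lemma minus_ne (p : ℂ) (hP : ∀ m : ℕ, 0 < m → p ^ m ≠ 1) (k : ℕ) (hk : 0 < k) :
    1 - p ^ k ≠ 0 := sub_ne_zero.2 (hP k hk).symm

lemma inv_minus_ne (p : ℂ) (hp : p ≠ 0) (hP : ∀ m : ℕ, 0 < m → p ^ m ≠ 1) (L k : ℕ) (hk : k ≠ L) :
    1 - (p ^ L)⁻¹ * p ^ k ≠ 0 := by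
  intro h
  apply hk
  apply pinj p hp hP
  have h0 := pow_ne_zero L hp
  field_simp at h
  linear_combination -h

lemma qpw_ne (p : ℂ) (hP : ∀ m : ℕ, 0 < m → p ^ m ≠ 1) (a k : ℕ) (ha : 0 < a) :
    qp (p ^ a) p k ≠ 0 := by
  apply qp_ne
  intro i _
  rw [← pow_add]
  exact hP _ (by omega)

lemma wt_flux (p : ℂ) (hp : p ≠ 0) (hP : ∀ m : ℕ, 0 < m → p ^ m ≠ 1) (L N k : ℕ) :
    wt p (p ^ N) (p ^ L) (k + 1) * opC p (p ^ L)⁻¹ (p ^ N)⁻¹ (p ^ (k + 1)) =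
      wt p (p ^ N) (p ^ L) k * opA p (p ^ L)⁻¹ (p ^ N)⁻¹ (p ^ k) := by
  have a1 := plus_ne p hP (k + 1)
  have a2 := minus_ne p hP (2 * k + 1) (by omega)
  have a3 := minus_ne p hP (2 * k + 3) (by omega)
  have a4 := minus_ne p hP (L + 2 + k) (by omega)
  have a5 := minus_ne p hP (N + 2 + k) (by omega)
  have b1 := qpw_ne p hP (L + 2) k (by omega)
  have b2 := qpw_ne p hP (N + 2) k (by omega)
  have hx := pow_ne_zero N hp
  have hy := pow_ne_zero L hp
  have hk := pow_ne_zero k hp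
  rw [show 2 * k + 3 = k + k + 3 by ring] at a3
  rw [show 2 * k + 1 = k + k + 1 by ring] at a2
  simp only [wt, opA, opC, qp_succ]
  rw [show 2 * (k + 1) + 1 = k + k + 3 by ring, show 2 * k + 1 = k + k + 1 by ring]
  simp only [pow_add, pow_one, mul_pow] at *
  generalize qp (p ^ L * p ^ 2) p k = Q1 at *
  generalize qp (p ^ N * p ^ 2) p k = Q2 at *
  generalize qp (p ^ N)⁻¹ p k = Q3 at *
  generalize qp (p ^ L)⁻¹ p k = Q4 at *
  generalize (p ^ N) ^ k = u1 at *
  generalize (p ^ L) ^ k = u2 at *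
  generalize p ^ N = x at *
  generalize p ^ L = y at *
  generalize p ^ k = K at *
  have a2' : 1 - K ^ 2 * p ≠ 0 := by intro h; apply a2; linear_combination h
  have a3' : 1 - (K * p) ^ 2 * p ≠ 0 := by intro h; apply a3; linear_combination h
  have a4' : 1 - K * p ^ 2 * y ≠ 0 := by intro h; apply a4; linear_combination h
  have a5' : 1 - K * p ^ 2 * x ≠ 0 := by intro h; apply a5; linear_combination h
  have a3'' : 1 - K ^ 2 * p ^ 3 ≠ 0 := by intro h; apply a3; linear_combination h
  rw [show K * K * p ^ 3 = K ^ 2 * p ^ 3 by ring, show K * K * p = K ^ 2 * p by ring,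
    show K ^ 2 * p ^ 2 * p = K ^ 2 * p ^ 3 by ring]
  field_simp

lemma casorati (p : ℂ) (hp : p ≠ 0) (hP : ∀ m : ℕ, 0 < m → p ^ m ≠ 1) (L N : ℕ) (f h : ℂ → ℂ)
    (K : ℕ) :
    ∑ k ∈ Finset.range (K + 1), wt p (p ^ N) (p ^ L) k *
      (h (p ^ k) * Lop p (p ^ L)⁻¹ (p ^ N)⁻¹ f (p ^ k) -
        f (p ^ k) * Lop p (p ^ L)⁻¹ (p ^ N)⁻¹ h (p ^ k)) =
    wt p (p ^ N) (p ^ L) K * opA p (p ^ L)⁻¹ (p ^ N)⁻¹ (p ^ K) *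
      (h (p ^ K) * f (p ^ (K + 1)) - f (p ^ K) * h (p ^ (K + 1))) := by
  induction K with
  | zero =>
    simp only [zero_add, Finset.sum_range_one, Lop, opC, pow_zero, pow_one, one_mul, sub_self]
    ring
  | succ K ih =>
    rw [Finset.sum_range_succ, ih, ← wt_flux p hp hP]
    simp only [Lop]
    rw [show p ^ (K + 1) * p⁻¹ = p ^ K by rw [pow_succ]; field_simp, ← pow_succ p (K + 1)]
    ring

def TT (p : ℂ) (L N i j : ℕ) : ℂ := ∑ k ∈ Finset.range (L + 1),
  wt p (p ^ N) (p ^ L) k * ph 1 p (p ^ k) i * Rf p (p ^ L)⁻¹ (p ^ N)⁻¹ j (p ^ k)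

lemma hjm (p : ℂ) (hp : p ≠ 0) (hP : ∀ m : ℕ, 0 < m → p ^ m ≠ 1) (L N j : ℕ) (hL : j ≤ L)
    (hN : j ≤ N) (m : ℕ) (hm : m < j) :
    1 - p ^ (m + 1) ≠ 0 ∧ 1 - (p ^ L)⁻¹ * p ^ m ≠ 0 ∧ 1 - (p ^ N)⁻¹ * p ^ m ≠ 0 :=
  ⟨minus_ne p hP _ (by omega), inv_minus_ne p hp hP _ _ (by omega),
    inv_minus_ne p hp hP _ _ (by omega)⟩

lemma TT_green (p : ℂ) (hp : p ≠ 0) (hP : ∀ m : ℕ, 0 < m → p ^ m ≠ 1) (L N i j : ℕ) (hL : j ≤ L)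
    (hN : j ≤ N) : muE p (p ^ L)⁻¹ (p ^ N)⁻¹ j * TT p L N i j =
    ∑ k ∈ Finset.range (L + 1), wt p (p ^ N) (p ^ L) k * Rf p (p ^ L)⁻¹ (p ^ N)⁻¹ j (p ^ k) *
      Lop p (p ^ L)⁻¹ (p ^ N)⁻¹ (fun X => ph 1 p X i) (p ^ k) := by
  have h := casorati p hp hP L N (Rf p (p ^ L)⁻¹ (p ^ N)⁻¹ j) (fun X => ph 1 p X i) L
  have h0 : opA p (p ^ L)⁻¹ (p ^ N)⁻¹ (p ^ L) = 0 := by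
    rw [opA, inv_mul_cancel₀ (pow_ne_zero L hp)]; simp
  rw [h0, mul_zero, zero_mul] at h
  rw [← sub_eq_zero, ← h, TT, Finset.mul_sum, ← Finset.sum_sub_distrib]
  apply Finset.sum_congr rfl
  intro k _
  have a2 : 1 - (p ^ k) ^ 2 * p ≠ 0 := by
    rw [← pow_mul, ← pow_succ]; exact minus_ne p hP _ (by omega)
  have a3 : 1 + p ^ k * p ≠ 0 := by rw [← pow_succ]; exact plus_ne p hP _
  rw [Lop_Rf p _ _ _ hp (pow_ne_zero k hp) (plus_ne p hP k) a3 a2 j (hjm p hp hP L N j hL hN)]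
  ring

lemma TT_rec (p : ℂ) (hp : p ≠ 0) (hP : ∀ m : ℕ, 0 < m → p ^ m ≠ 1) (L N i j : ℕ) (hL : j ≤ L)
    (hN : j ≤ N) :
    (muE p (p ^ L)⁻¹ (p ^ N)⁻¹ j - muE p (p ^ L)⁻¹ (p ^ N)⁻¹ (i + 1)) * TT p L N (i + 1) j =
      ccE p (p ^ L)⁻¹ (p ^ N)⁻¹ i * TT p L N i j := by
  rw [sub_mul, TT_green p hp hP L N (i + 1) j hL hN, TT, TT, Finset.mul_sum, Finset.mul_sum,
    ← Finset.sum_sub_distrib]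
  apply Finset.sum_congr rfl
  intro k _
  have a2 : 1 - (p ^ k) ^ 2 * p ≠ 0 := by
    rw [← pow_mul, ← pow_succ]; exact minus_ne p hP _ (by omega)
  have a3 : 1 + p ^ k * p ≠ 0 := by rw [← pow_succ]; exact plus_ne p hP _
  rw [Lop_ph p _ _ _ hp (pow_ne_zero k hp) (plus_ne p hP k) a3 a2]
  ring

lemma mu_ne (p : ℂ) (hp : p ≠ 0) (hP : ∀ m : ℕ, 0 < m → p ^ m ≠ 1) (L N i j : ℕ) (hL : j ≤ L)
    (hN : j ≤ N) (hij : i < j) :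
    muE p (p ^ L)⁻¹ (p ^ N)⁻¹ j - muE p (p ^ L)⁻¹ (p ^ N)⁻¹ i ≠ 0 := by
  have h1 : p ^ j - p ^ i ≠ 0 := by
    rw [sub_ne_zero]; intro h; have := pinj p hp hP _ _ h; omega
  have h2 : p ^ (i + j) - p ^ (L + N + 1) ≠ 0 := by
    rw [sub_ne_zero]; intro h; have := pinj p hp hP _ _ h; omega
  have hx := pow_ne_zero N hp
  have hy := pow_ne_zero L hp
  have hi := pow_ne_zero i hp
  have hj := pow_ne_zero j hp
  have : muE p (p ^ L)⁻¹ (p ^ N)⁻¹ j - muE p (p ^ L)⁻¹ (p ^ N)⁻¹ i =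
      (p ^ j - p ^ i) * (p ^ (i + j) - p ^ (L + N + 1)) / (p ^ i * p ^ j * p ^ N * p ^ L * p) := by
    rw [muE, muE]
    simp only [pow_add, pow_one]
    generalize p ^ N = x at *
    generalize p ^ L = y at *
    generalize p ^ i = I at *
    generalize p ^ j = J at *
    field_simp
    ring
  rw [this]
  apply div_ne_zero (mul_ne_zero h1 h2)
  positivity

lemma TT_zero (p : ℂ) (hp : p ≠ 0) (hP : ∀ m : ℕ, 0 < m → p ^ m ≠ 1) (L N i j : ℕ) (hL : j ≤ L)
    (hN : j ≤ N) (hij : i < j) : TT p L N i j = 0 := by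
  induction i with
  | zero =>
    have h := TT_green p hp hP L N 0 j hL hN
    simp only [Lop_ph0, mul_zero, Finset.sum_const_zero] at h
    have h2 := mu_ne p hp hP L N 0 j hL hN hij
    rw [show muE p (p ^ L)⁻¹ (p ^ N)⁻¹ 0 = 0 by simp [muE], sub_zero] at h2
    exact (mul_eq_zero.1 h).resolve_left h2
  | succ i ih =>
    have h := TT_rec p hp hP L N i j hL hN
    rw [ih (by omega), mul_zero] at h
    exact (mul_eq_zero.1 h).resolve_left (mu_ne p hp hP L N _ j hL hN hij)

lemma wt_partial (p x y : ℂ) (hp : p ≠ 0) (hx : x ≠ 0) (hy : y ≠ 0)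
    (h1 : ∀ k, 1 - y * p ^ 2 * p ^ k ≠ 0) (h2 : ∀ k, 1 - x * p ^ 2 * p ^ k ≠ 0) (K : ℕ) :
    ∑ k ∈ Finset.range (K + 1), (wt p (x * p) y k * ((1 - p ^ 2 * x * y) * (1 - p * x)) -
      wt p x y k * ((1 - p * x * y) * (1 - p ^ 2 * x))) =
    (p * x * y) ^ (K + 1) * qp y⁻¹ p (K + 1) * qp x⁻¹ p K /
      (qp (y * p ^ 2) p K * qp (x * p ^ 2) p (K + 1)) * (1 - p ^ (K + 1)) ^ 2 * (1 - p ^ 2 * x) := by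
  have hq1 : ∀ k, qp (y * p ^ 2) p k ≠ 0 := fun k => qp_ne _ _ _ fun i _ h => h1 i (by rw [h]; ring)
  have hq2 : ∀ k, qp (x * p ^ 2) p k ≠ 0 := fun k => qp_ne _ _ _ fun i _ h => h2 i (by rw [h]; ring)
  have hx2 : 1 - x * p ^ 2 ≠ 0 := by simpa using h2 0
  induction K with
  | zero =>
    simp only [zero_add, Finset.sum_range_one, wt, qp_zero, qp_succ, pow_zero, mul_zero, mul_one,
      pow_one, one_mul]
    have : 1 - p ^ 2 * x ≠ 0 := by rwa [mul_comm]
    field_simp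
    ring
  | succ K ih =>
    rw [Finset.sum_range_succ, ih]
    have e1 : qp (x * p)⁻¹ p (K + 1) = (1 - (x * p)⁻¹) * qp x⁻¹ p K := by
      rw [qp_succ', show (x * p)⁻¹ * p = x⁻¹ by field_simp]
    have e2 : qp (x * p * p ^ 2) p (K + 1) =
        qp (x * p ^ 2) p K * (1 - x * p ^ 2 * p ^ K) * (1 - x * p ^ 2 * p ^ (K + 1)) /
          (1 - x * p ^ 2) := by
      rw [eq_div_iff hx2, mul_comm, show x * p * p ^ 2 = x * p ^ 2 * p by ring, ← qp_succ',
        qp_succ, qp_succ]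
    have a1 := h1 K
    have a2 := h2 K
    have a3 := h2 (K + 1)
    have b1 := hq1 K
    have b2 := hq2 K
    rw [wt, wt, e1, e2]
    simp only [qp_succ]
    rw [show 2 * (K + 1) + 1 = K + K + 3 by ring]
    simp only [pow_add, pow_one, mul_pow] at *
    generalize qp (y * p ^ 2) p K = Q1 at *
    generalize qp (x * p ^ 2) p K = Q2 at *
    generalize qp x⁻¹ p K = Q3 at *
    generalize qp y⁻¹ p K = Q4 at *
    generalize x ^ K = u1 at *
    generalize y ^ K = u2 at *
    generalize p ^ K = P at *
    rw [show x * p ^ 2 * (P * p) = x * p ^ 3 * P by ring] at *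
    clear ih e1 e2
    have e4 : 1 - p ^ 2 * x = 1 - x * p ^ 2 := by ring
    rw [e4]
    generalize hD1 : 1 - y * p ^ 2 * P = D1 at *
    generalize hD2 : 1 - x * p ^ 2 * P = D2 at *
    generalize hD3 : 1 - x * p ^ 3 * P = D3 at *
    generalize hD4 : 1 - x * p ^ 2 = D4 at *
    rw [← sub_eq_zero]
    field_simp
    rw [← hD1, ← hD2, ← hD3, ← hD4]
    ring

lemma wt_sum (p : ℂ) (hp : p ≠ 0) (hP : ∀ m : ℕ, 0 < m → p ^ m ≠ 1) (L N : ℕ) :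
    (∑ k ∈ Finset.range (L + 1), wt p (p ^ N) (p ^ L) k) * (1 - p ^ (L + N + 1)) =
      (1 - p ^ (L + 1)) * (1 - p ^ (N + 1)) := by
  have hy := pow_ne_zero L hp
  induction N with
  | zero =>
    rw [Finset.sum_eq_single 0]
    · simp [wt, qp_zero]; ring
    · intro k _ hk
      obtain ⟨k, rfl⟩ := Nat.exists_eq_succ_of_ne_zero hk
      simp [wt, qp_succ']
    · simp
  | succ N ih =>
    have hx := pow_ne_zero N hp
    have h1 : ∀ a k, 1 - p ^ a * p ^ 2 * p ^ k ≠ 0 := fun a k => by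
      rw [← pow_add, ← pow_add]; exact minus_ne p hP _ (by omega)
    have h := wt_partial p (p ^ N) (p ^ L) hp hx hy (h1 L) (h1 N) L
    rw [qp_succ (p ^ L)⁻¹, inv_mul_cancel₀ hy, Finset.sum_sub_distrib, ← Finset.sum_mul,
      ← Finset.sum_mul] at h
    have a1 := minus_ne p hP (N + 1) (by omega)
    have a2 := minus_ne p hP (L + N + 1) (by omega)
    rw [pow_succ p N]
    apply mul_right_cancel₀ a1
    simp only [pow_add, pow_one] at *
    linear_combination h + (1 - p ^ 2 * p ^ N) * ih

/-- lowering coefficient -/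
lemma TT_step (p : ℂ) (hp : p ≠ 0) (hP : ∀ m : ℕ, 0 < m → p ^ m ≠ 1) (L N j : ℕ) (hL : j + 1 ≤ L)
    (hN : j + 1 ≤ N) (c d J : ℂ) (hc : c = (p ^ L)⁻¹) (hd : d = (p ^ N)⁻¹) (hJ : J = p ^ (j + 1)) :
    TT p L N (j + 1) (j + 1) * (p * (c * d * J ^ 2 - p) * (p ^ 2 - c * d * J ^ 2)) =
      J * (J - 1) * (c * d * J - p ^ 2) * (d * J - p) * (c * J - p) * TT p L N j j := by
  have hx := pow_ne_zero N hp
  have hy := pow_ne_zero L hp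
  have hJ0 : J ≠ 0 := hJ ▸ pow_ne_zero _ hp
  have n1 : c * d * J ^ 2 - p ≠ 0 := by
    intro h
    have : p ^ ((j + 1) + (j + 1)) = p ^ (L + N + 1) := by
      rw [hc, hd] at h
      field_simp at h
      simp only [pow_add, pow_one] at *
      rw [hJ] at h
      linear_combination h
    have := pinj p hp hP _ _ this
    omega
  have n2 : p ^ 2 - c * d * J ^ 2 ≠ 0 := by
    intro h
    have : p ^ ((j + 1) + (j + 1)) = p ^ (L + N + 2) := by
      rw [hc, hd] at h
      field_simp at h
      simp only [pow_add, pow_one] at *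
      rw [hJ] at h
      linear_combination -h
    have := pinj p hp hP _ _ this
    omega
  set g := c * d / p ^ 2 with hg
  set bp := -(1 - J * p) * (1 - c * J) * (1 - d * J) / (J * (p - c * d * J ^ 2)) with hbp
  set bm := -(c * d * J - p ^ 2) * (d * J - p) * (c * J - p) / (p ^ 2 * (c * d * J ^ 2 - p)) with hbm
  let Ep : ℂ → ℂ := fun X => ∑ m ∈ Finset.range (j + 1),
    eE p c d (m + 1) * (1 - p ^ (m + 1)) * (ph g p J m * (1 - g * J * p * p ^ m)) * ph 1 p X (m + 1)
  let Em : ℂ → ℂ := fun X => ∑ m ∈ Finset.range (j + 1),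
    eE p c d (m + 1) * (1 - p ^ (m + 1)) * (ph g p J m * (1 - J⁻¹ * p ^ m)) * ph 1 p X (m + 1)
  have hjm' := hjm p hp hP L N (j + 1) hL hN
  rw [← hc, ← hd] at hjm'
  have n1' : p - c * d * J ^ 2 ≠ 0 := by intro h; apply n1; linear_combination -h
  -- multiplication by the spectral variable
  have main : ∀ X, X ≠ 0 → (X⁻¹ + X * p - 1 - p) * Rf p c d (j + 1) X =
      bp * Ep X + bm * Em X -
        eE p c d (j + 1) * ph g p J (j + 1) * J⁻¹ * ph 1 p X (j + 1 + 1) := by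
    intro X hX
    have key : ∀ K ≤ j + 1, (X⁻¹ + X * p - 1 - p) * ∑ m ∈ Finset.range (K + 1),
        eE p c d m * ph g p J m * ph 1 p X m =
        bp * (∑ m ∈ Finset.range K, eE p c d (m + 1) * (1 - p ^ (m + 1)) *
          (ph g p J m * (1 - g * J * p * p ^ m)) * ph 1 p X (m + 1)) +
        bm * (∑ m ∈ Finset.range K, eE p c d (m + 1) * (1 - p ^ (m + 1)) *
          (ph g p J m * (1 - J⁻¹ * p ^ m)) * ph 1 p X (m + 1)) -
        eE p c d K * ph g p J K * (p ^ K)⁻¹ * ph 1 p X (K + 1) := by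
      intro K
      induction K with
      | zero =>
        intro _
        simp [ph_zero, ph_succ]
        field_simp
        ring
      | succ K ih =>
        intro hK
        rw [Finset.sum_range_succ, mul_add, ih (by omega), Finset.sum_range_succ,
          Finset.sum_range_succ]
        obtain ⟨a1, a2, a3⟩ := hjm' K (by omega)
        rw [eE_succ p c d hp K a1 a2 a3, ph_succ 1 p X (K + 1), ph_succ g p J K]
        have hpK := pow_ne_zero K hp
        have z : (1 - J⁻¹ * p ^ K) * (1 - g * J * p * p ^ K) * (p ^ (K + 1))⁻¹ * (1 - p ^ (K + 2)) -
            (1 - p ^ (K + 1)) * (1 - c * p ^ K) * (1 - d * p ^ K) * (p ^ (K + 1))⁻¹ =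
            bp * (1 - g * J * p * p ^ K) + bm * (1 - J⁻¹ * p ^ K) := by
          rw [hbp, hbm, hg]
          simp only [pow_add, pow_one]
          clear_value bp bm g
          generalize p ^ K = P at *
          rw [← neg_sub (c * d * J ^ 2) p]
          generalize hD1 : c * d * J ^ 2 - p = D1 at *
          field_simp
          rw [← hD1]
          ring
        have z2 : (X⁻¹ + X * p - 1 - p) = (p ^ (K + 1))⁻¹ * (1 - p ^ (K + 1)) * (1 - p ^ (K + 2)) -
            (p ^ (K + 1))⁻¹ * ((1 - X⁻¹ * p ^ (K + 1)) * (1 - 1 * X * p * p ^ (K + 1))) := by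
          simp only [pow_add, pow_one]
          field_simp
          ring
        have z3 : (p ^ K)⁻¹ = p * (p ^ (K + 1))⁻¹ := by rw [pow_succ]; field_simp
        rw [z2, z3]
        have z4 : p * p⁻¹ = 1 := mul_inv_cancel₀ hp
        linear_combination (eE p c d (K + 1) * ph g p J K * (1 - p ^ (K + 1)) * ph 1 p X (K + 1)) * z
          - (eE p c d (K + 1) * ph g p J K * (1 - p ^ (K + 1)) ^ 2 * (1 - c * p ^ K) *
            (1 - d * p ^ K) * (p ^ (K + 1))⁻¹ * ph 1 p X (K + 1)) * z4
    have := key (j + 1) le_rfl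
    rw [← hJ] at this
    rw [Rf, ← hJ]
    exact this
  -- the backward difference
  have hEm : ∀ X, (1 - J⁻¹) * (Rf p c d (j + 1) X - Rf p c d j X) = -J⁻¹ * (1 - g * J ^ 2) * Em X := by
    intro X
    have hjJ : p ^ j = J * p⁻¹ := by rw [hJ, pow_succ]; field_simp
    have e : Rf p c d j X = ∑ m ∈ Finset.range (j + 1 + 1),
        eE p c d m * ph g p (J * p⁻¹) m * ph 1 p X m := by
      rw [Finset.sum_range_succ, ← hjJ, ph_top g p hp j, Rf]; ring
    rw [e, Rf, ← hJ, Finset.sum_range_succ', Finset.sum_range_succ' _ (j + 1)]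
    simp only [ph_zero, Em, Finset.mul_sum]
    rw [add_sub_add_right_eq_sub, ← Finset.sum_sub_distrib, Finset.mul_sum]
    apply Finset.sum_congr rfl
    intro m _
    have := ph_diff' g p J hp hJ0 m
    linear_combination (eE p c d (m + 1) * ph 1 p X (m + 1)) * this
  -- functional
  let Lam : (ℂ → ℂ) → ℂ := fun f => ∑ k ∈ Finset.range (L + 1),
    wt p (p ^ N) (p ^ L) k * ph 1 p (p ^ k) j * f (p ^ k)
  have hT : ∀ j', TT p L N j j' = Lam (Rf p c d j') := by intro j'; simp only [TT, Lam, hc, hd]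
  have t0 : TT p L N j (j + 1) = 0 := TT_zero p hp hP L N j (j + 1) hL hN (by omega)
  have LEm : -J⁻¹ * (1 - g * J ^ 2) * Lam Em = - (1 - J⁻¹) * TT p L N j j := by
    have : -J⁻¹ * (1 - g * J ^ 2) * Lam Em = (1 - J⁻¹) * (TT p L N j (j + 1) - TT p L N j j) := by
      rw [hT, hT]
      simp only [Lam, Finset.mul_sum, ← Finset.sum_sub_distrib]
      apply Finset.sum_congr rfl
      intro k _
      linear_combination (-(wt p (p ^ N) (p ^ L) k * ph 1 p (p ^ k) j)) * hEm (p ^ k)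
    rw [this, t0]; ring
  have LEp : bp * Lam Ep = eE p c d (j + 1) * ph g p J (j + 1) * J⁻¹ *
      Lam (fun X => ph 1 p X (j + 1 + 1)) := by
    by_cases hcase : j + 1 < L ∧ j + 1 < N
    · obtain ⟨c1, c2⟩ := hcase
      obtain ⟨a1, a2, a3⟩ := hjm p hp hP L N (j + 2) c1 c2 (j + 1) (by omega)
      rw [← hc, ← hJ] at a2
      rw [← hd, ← hJ] at a3
      have a1' := a1
      rw [pow_succ, ← hJ] at a1'
      have n3 : 1 - g * J ^ 2 * p ^ 2 ≠ 0 := by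
        intro h
        have : p ^ ((j + 1) + (j + 1)) = p ^ (L + N) := by
          rw [hg, hc, hd] at h
          field_simp at h
          simp only [pow_add, pow_one] at *
          rw [hJ] at h
          linear_combination -h
        have := pinj p hp hP _ _ this
        omega
      have t1 : TT p L N j (j + 1 + 1) = 0 := TT_zero p hp hP L N j (j + 1 + 1) c1 c2 (by omega)
      have ee := eE_succ p c d hp (j + 1) a1 (by rwa [← hJ]) (by rwa [← hJ])
      rw [← hJ, pow_succ p (j + 1), ← hJ] at ee
      have hEp : ∀ X, (1 - g * J * p) * (Rf p c d (j + 1 + 1) X - Rf p c d (j + 1) X) =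
          -J⁻¹ * p⁻¹ * (1 - g * J ^ 2 * p ^ 2) * (Ep X + eE p c d (j + 1 + 1) * (1 - J * p) *
            (ph g p J (j + 1) * (1 - g * J * p * J)) * ph 1 p X (j + 1 + 1)) := by
        intro X
        have hjJ : p ^ (j + 1 + 1) = J * p := by rw [hJ, pow_succ]
        have e : Rf p c d (j + 1) X = ∑ m ∈ Finset.range (j + 1 + 1 + 1),
            eE p c d m * ph g p J m * ph 1 p X m := by
          rw [Finset.sum_range_succ, hJ, ph_top g p hp (j + 1), Rf]; ring
        have e2 : Ep X + eE p c d (j + 1 + 1) * (1 - J * p) *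
            (ph g p J (j + 1) * (1 - g * J * p * J)) * ph 1 p X (j + 1 + 1) =
            ∑ m ∈ Finset.range (j + 1 + 1), eE p c d (m + 1) * (1 - p ^ (m + 1)) *
              (ph g p J m * (1 - g * J * p * p ^ m)) * ph 1 p X (m + 1) := by
          rw [Finset.sum_range_succ, hjJ, ← hJ]
        rw [e2, e, Rf, hjJ, Finset.sum_range_succ', Finset.sum_range_succ' _ (j + 1 + 1)]
        simp only [ph_zero]
        rw [add_sub_add_right_eq_sub, ← Finset.sum_sub_distrib, Finset.mul_sum, Finset.mul_sum]
        apply Finset.sum_congr rfl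
        intro m _
        have := ph_diff g p J hp hJ0 m
        linear_combination (eE p c d (m + 1) * ph 1 p X (m + 1)) * this
      have s1 : -J⁻¹ * p⁻¹ * (1 - g * J ^ 2 * p ^ 2) * (Lam Ep + eE p c d (j + 1 + 1) * (1 - J * p) *
            (ph g p J (j + 1) * (1 - g * J * p * J)) * Lam (fun X => ph 1 p X (j + 1 + 1))) = 0 := by
        have : -J⁻¹ * p⁻¹ * (1 - g * J ^ 2 * p ^ 2) * (Lam Ep + eE p c d (j + 1 + 1) * (1 - J * p) *
            (ph g p J (j + 1) * (1 - g * J * p * J)) * Lam (fun X => ph 1 p X (j + 1 + 1))) =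
            (1 - g * J * p) * (TT p L N j (j + 1 + 1) - TT p L N j (j + 1)) := by
          rw [hT, hT]
          simp only [Lam, Finset.mul_sum, ← Finset.sum_sub_distrib, ← Finset.sum_add_distrib]
          apply Finset.sum_congr rfl
          intro k _
          linear_combination (-(wt p (p ^ N) (p ^ L) k * ph 1 p (p ^ k) j)) * hEp (p ^ k)
        rw [this, t0, t1]; ring
      have s2 := (mul_eq_zero.1 s1).resolve_left (by
        refine mul_ne_zero (mul_ne_zero ?_ (inv_ne_zero hp)) n3
        exact neg_ne_zero.2 (inv_ne_zero hJ0))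
      have s3 : bp * (1 - J * p) * (1 - g * J * p * J) =
          -((1 - J * p) ^ 2 * (1 - c * J) * (1 - d * J) / p) * J⁻¹ := by
        rw [hbp]
        have : 1 - g * J * p * J = (p - c * d * J ^ 2) / p := by rw [hg]; field_simp
        rw [this]
        clear_value bp bm g
        generalize p - c * d * J ^ 2 = D1 at *
        field_simp
      rw [ee]
      linear_combination bp * s2 - (eE p c d (j + 1 + 1) * ph g p J (j + 1) *
        Lam (fun X => ph 1 p X (j + 1 + 1))) * s3
    · have hb0 : bp = 0 := by
        have : (1 - c * J) * (1 - d * J) = 0 := by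
          rcases not_and_or.1 hcase with h | h
          · have : j + 1 = L := by omega
            rw [hc, hJ, this, inv_mul_cancel₀ hy]; ring
          · have : j + 1 = N := by omega
            rw [hd, hJ, this, inv_mul_cancel₀ hx]; ring
        rw [hbp, mul_assoc, this]; simp
      have hz : Lam (fun X => ph 1 p X (j + 1 + 1)) = 0 := by
        apply Finset.sum_eq_zero
        intro k hk
        have hk := Finset.mem_range.1 hk
        by_cases hk2 : k < j + 1 + 1
        · simp only []
          rw [ph_eq_zero 1 p hp k _ hk2, mul_zero]
        · have : j + 1 = N := by omega
          have : qp (p ^ N)⁻¹ p k = 0 := by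
            rw [show k = N + 1 + (k - (N + 1)) by omega, qp_add, qp_succ, inv_mul_cancel₀ hx]
            ring
          rw [wt, this]; ring
      rw [hb0, hz]; ring
  have fin : TT p L N (j + 1) (j + 1) = -p ^ j * (bm * Lam Em) := by
    have s1 : TT p L N (j + 1) (j + 1) - (1 + p ^ (2 * j + 1) - p ^ j * (1 + p)) * TT p L N j (j + 1) =
        -p ^ j * (bp * Lam Ep + bm * Lam Em - eE p c d (j + 1) * ph g p J (j + 1) * J⁻¹ *
      Lam (fun X => ph 1 p X (j + 1 + 1))) := by
      rw [hT]
      simp only [TT, Lam, ← hc, ← hd, Finset.mul_sum, ← Finset.sum_sub_distrib,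
        ← Finset.sum_add_distrib]
      apply Finset.sum_congr rfl
      intro k _
      have hk0 := pow_ne_zero k hp
      have := main (p ^ k) hk0
      rw [ph_succ 1 p (p ^ k) j]
      have zz : (1 - (p ^ k)⁻¹ * p ^ j) * (1 - 1 * p ^ k * p * p ^ j) =
          1 + p ^ (2 * j + 1) - p ^ j * ((p ^ k)⁻¹ + p ^ k * p) := by
        rw [show 2 * j + 1 = j + j + 1 by ring]
        simp only [pow_add, pow_one]
        field_simp
        ring
      linear_combination (-p ^ j * wt p (p ^ N) (p ^ L) k * ph 1 p (p ^ k) j) * this +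
        (wt p (p ^ N) (p ^ L) k * ph 1 p (p ^ k) j * Rf p c d (j + 1) (p ^ k)) * zz
    rw [t0] at s1
    linear_combination s1 - p ^ j * LEp
  have hgJ : 1 - g * J ^ 2 = (p ^ 2 - c * d * J ^ 2) / p ^ 2 := by rw [hg]; field_simp
  have hjJ : p ^ j = J * p⁻¹ := by rw [hJ, pow_succ]; field_simp
  rw [hgJ] at LEm
  rw [fin, hbm, hjJ]
  clear_value bp bm g
  generalize c * d * J ^ 2 - p = D1 at *
  generalize p ^ 2 - c * d * J ^ 2 = D2 at *
  generalize Lam Em = Q at *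
  field_simp at LEm ⊢
  linear_combination (-(c * d * J - p ^ 2) * (d * J - p) * (c * J - p)) * LEm

lemma qpp_succ (p : ℂ) (k : ℕ) : qp p p (k + 1) = qp p p k * (1 - p ^ (k + 1)) := by
  rw [qp_succ, pow_succ']

lemma Rf_zero (p c d X : ℂ) : Rf p c d 0 X = 1 := by
  simp [Rf, eE, ph_zero, qp_zero]

lemma TT_step2 (p : ℂ) (hp : p ≠ 0) (hP : ∀ m : ℕ, 0 < m → p ^ m ≠ 1) (m n j : ℕ) :
    TT p (j + 1 + m) (j + 1 + n) (j + 1) (j + 1) *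
      (p * (1 - p ^ (m + n + 1)) * (1 - p ^ (m + n + 2))) =
    (1 - p ^ (j + 1)) * (1 - p ^ (m + n + j + 3)) * (1 - p ^ (n + 1)) * (1 - p ^ (m + 1)) *
      TT p (j + 1 + m) (j + 1 + n) j j := by
  have h := TT_step p hp hP (j + 1 + m) (j + 1 + n) j (by omega) (by omega) _ _ _ rfl rfl rfl
  generalize TT p (j + 1 + m) (j + 1 + n) (j + 1) (j + 1) = T1 at *
  generalize TT p (j + 1 + m) (j + 1 + n) j j = T0 at *
  have e1 := pow_ne_zero j hp
  have e2 := pow_ne_zero m hp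
  have e3 := pow_ne_zero n hp
  simp only [pow_add, pow_one] at *
  generalize p ^ j = a at *
  generalize p ^ m = b at *
  generalize p ^ n = c at *
  have : (p * (1 - b * c * p) * (b * c * p ^ 2 - 1)) * T1 =
      (a * p - 1) * (1 - b * c * a * p ^ 3) * (1 - c * p) * (1 - b * p) * T0 := by
    have h2 := congrArg (fun t => t * (b * c) ^ 2) h
    field_simp at h2
    linear_combination h2
  linear_combination -this

lemma TT_diag (p : ℂ) (hp : p ≠ 0) (hP : ∀ m : ℕ, 0 < m → p ^ m ≠ 1) (j : ℕ) : ∀ m n : ℕ,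
    TT p (j + m) (j + n) j j * (qp p p n * qp p p m * qp p p (j + m + n + 1) * p ^ j) =
      qp p p j * (1 - p ^ (j + n + 1)) * qp p p (j + n) * qp p p (j + m + 1) * qp p p (m + n) := by
  induction j with
  | zero =>
    intro m n
    have h := wt_sum p hp hP m n
    have : TT p (0 + m) (0 + n) 0 0 = ∑ k ∈ Finset.range (m + 1), wt p (p ^ n) (p ^ m) k := by
      simp [TT, ph_zero, Rf_zero]
    rw [this]
    simp only [zero_add, qpp_succ, pow_zero, qp_zero]
    linear_combination (qp p p n * qp p p m * qp p p (m + n)) * h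
  | succ j ih =>
    intro m n
    have h := TT_step2 p hp hP m n j
    have h0 := ih (m + 1) (n + 1)
    rw [show j + (m + 1) = j + 1 + m by ring, show j + (n + 1) = j + 1 + n by ring] at h0
    rw [show j + 1 + m + (n + 1) + 1 = (j + 1 + m + n + 1) + 1 by ring,
      show m + 1 + (n + 1) = m + n + 1 + 1 by ring, qpp_succ p n, qpp_succ p m,
      qpp_succ p (j + 1 + m + n + 1), qpp_succ p (m + n + 1), qpp_succ p (m + n)] at h0
    have n1 := minus_ne p hP (m + n + 1) (by omega)
    have n2 := minus_ne p hP (m + n + 2) (by omega)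
    rw [qpp_succ p j]
    apply mul_right_cancel₀ (mul_ne_zero n1 n2)
    rw [show j + 1 + m + n + 1 + 1 = m + n + j + 3 by ring] at h0
    rw [pow_succ p j]
    linear_combination (qp p p n * qp p p m * qp p p (j + 1 + m + n + 1) * p ^ j) * h +
      (1 - p ^ (j + 1)) * h0

def Kf (f : Polynomial ℂ) (e : ℕ) (w : ℂ) : ℂ :=
  ∑ k ∈ Finset.range (e + 1), f.coeff k * ((1 + w ^ 2) / 2) ^ k * w ^ (e - k)

lemma Kf_cont (f : Polynomial ℂ) (e : ℕ) : Continuous (Kf f e) := by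
  unfold Kf; fun_prop

lemma Kf_zero (f : Polynomial ℂ) (e : ℕ) : Kf f e 0 = f.coeff e / 2 ^ e := by
  rw [Kf, Finset.sum_range_succ, Finset.sum_eq_zero]
  · simp; ring
  · intro k hk
    have := Finset.mem_range.1 hk
    rw [zero_pow (show e - k ≠ 0 by omega), mul_zero]

lemma Kf_eval (f : Polynomial ℂ) (e : ℕ) (he : f.natDegree ≤ e) (w : ℂ) (hw : w ≠ 0) :
    Kf f e w = w ^ e * f.eval ((w + w⁻¹) / 2) := by
  rw [Polynomial.eval_eq_sum_range' (Nat.lt_succ_of_le he), Finset.mul_sum, Kf]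
  apply Finset.sum_congr rfl
  intro k hk
  have hk := Finset.mem_range.1 hk
  have : (1 + w ^ 2) / 2 = w * ((w + w⁻¹) / 2) := by field_simp; ring
  rw [this, mul_pow, show w ^ e = w ^ k * w ^ (e - k) by rw [← pow_add]; congr 1; omega]
  ring

lemma eq_at_zero (f g : ℂ → ℂ) (hf : Continuous f) (hg : Continuous g)
    (h : ∀ w, w ≠ 0 → f w = g w) : f 0 = g 0 := by
  have : f = g := Continuous.ext_on (dense_compl_singleton (0 : ℂ)) hf hg (fun w hw => h w hw)
  rw [this]

lemma C_natDegree (C : ℂ → ℂ → ℕ → Polynomial ℂ) (hC : IsUltra C) (p β : ℂ) (n : ℕ) :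
    (C p β n).natDegree ≤ n := Polynomial.natDegree_le_of_degree_le (hC p β n).1

lemma C_top (C : ℂ → ℂ → ℕ → Polynomial ℂ) (hC : IsUltra C) (p β : ℂ) (n : ℕ) :
    (C p β n).coeff n = 2 ^ n * (qp β p n / qp p p n) := by
  have h := eq_at_zero (Kf (C p β n) n) (fun w => ∑ r ∈ Finset.range (n + 1),
    qp β p r * qp β p (n - r) / (qp p p r * qp p p (n - r)) * w ^ (2 * (n - r)))
    (Kf_cont _ _) (by fun_prop) (by
      intro w hw
      rw [Kf_eval _ _ (C_natDegree C hC p β n) w hw, (hC p β n).2 w hw, Finset.mul_sum]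
      apply Finset.sum_congr rfl
      intro r hr
      have hr := Finset.mem_range.1 hr
      have : w ^ (2 * (n - r)) = w ^ n * w ^ ((n : ℤ) - 2 * r) := by
        rw [← zpow_natCast, ← zpow_natCast, ← zpow_add₀ hw]
        congr 1
        push_cast [Nat.cast_sub (show r ≤ n by omega)]
        ring
      rw [this]; ring)
  rw [Kf_zero] at h
  rw [Finset.sum_range_succ, Finset.sum_eq_zero] at h
  · simp [qp_zero] at h
    field_simp at h
    rw [h]; ring
  · intro k hk
    have := Finset.mem_range.1 hk
    rw [zero_pow (by omega), mul_zero]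

def cf (q : ℂ) (L n i j k : ℕ) : ℂ :=
  ((-1 : ℂ) ^ k *
            q ^ ((n : ℤ) + (2 * (k : ℤ) + 1) * ((k : ℤ) - (i : ℤ)) +
                (j : ℤ) * (2 * (k : ℤ) + 1) + 2 * (k : ℤ) * ((L : ℤ) + (n : ℤ) + 1) -
                (k : ℤ) ^ 2) *
            (qp (q ^ 2) (q ^ 2) k * qp (q ^ 2) (q ^ 2) (k + i) /
              (qp (q ^ 2) (q ^ 2) (2 * k) * qp (q ^ 2) (q ^ 2) i)) *
            (qp (q ^ (-(2 * (L : ℤ)))) (q ^ 2) k *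
                qp (q ^ (-(2 * (j : ℤ) + 2 * (n : ℤ)))) (q ^ 2) k /
              (qp (q ^ 2) (q ^ 2) k * qp (q ^ (2 * (L : ℤ) + 4)) (q ^ 2) k)) *
            (qp (q ^ 2) (q ^ 2) (n + j - k) /
              qp (q ^ (4 * (k : ℤ) + 4)) (q ^ 2) (n + j - k)) *
            qRacah (q ^ 2) 1 1 (q ^ (-(2 * (n : ℤ) + 2 * (j : ℤ) + 2)))
              (q ^ (-(2 * (L : ℤ) + 2))) k j)

def PP (q : ℂ) (L : ℕ) (C : ℂ → ℂ → ℕ → Polynomial ℂ) (n i j : ℕ) : Polynomial ℂ :=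
  ∑ k ∈ Finset.Icc i (min L (n + j)), Polynomial.C (cf q L n i j k) *
    (C (q ^ 2) (q ^ (-(2 * (k : ℤ)))) (k - i) *
          C (q ^ 2) (q ^ (2 * (k : ℤ) + 2)) (n + j - k))

lemma Pm_eq (q : ℂ) (L : ℕ) (C : ℂ → ℂ → ℕ → Polynomial ℂ) (n : ℕ) (i j : Fin (L + 1)) :
    Pm q L C n i j = PP q L C n i j := rfl

lemma zneg (q : ℂ) (a : ℤ) (L : ℕ) (h : a = -(2 * (L : ℤ))) : q ^ a = ((q ^ 2) ^ L)⁻¹ := by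
  rw [← pow_mul, ← zpow_natCast, ← _root_.zpow_neg, h]; congr 1; 

lemma zpos (q : ℂ) (a : ℤ) (L : ℕ) (h : a = 2 * (L : ℤ)) : q ^ a = (q ^ 2) ^ L := by
  rw [← pow_mul, ← zpow_natCast, h]; congr 1; 

lemma racah_eq (p γ δ : ℂ) (hp : p ≠ 0) (L N k j : ℕ) (hγ : γ = (p ^ (N + 1))⁻¹)
    (hδ : δ = (p ^ (L + 1))⁻¹) :
    qRacah p 1 1 γ δ k j = Rf p (p ^ L)⁻¹ (p ^ N)⁻¹ j (p ^ k) := by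
  rw [Rf, qRacah, ← Finset.sum_subset (Finset.range_mono (show min k j + 1 ≤ j + 1 by omega))]
  · apply Finset.sum_congr rfl
    intro m _
    have a1 : γ * p = (p ^ N)⁻¹ := by rw [hγ, pow_succ]; field_simp
    have a2 : 1 * δ * p = (p ^ L)⁻¹ := by rw [hδ, pow_succ]; field_simp
    have a3 : γ * δ * p ^ (j + 1) = (p ^ L)⁻¹ * (p ^ N)⁻¹ / p ^ 2 * p ^ j * p := by
      rw [hγ, hδ, pow_succ, pow_succ, pow_succ]; field_simp
    have a4 : (1 : ℂ) * 1 * p ^ (k + 1) = 1 * p ^ k * p := by rw [pow_succ]; ring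
    rw [a1, a2, a3, a4, one_mul p, eE, ph, ph, _root_.zpow_neg, _root_.zpow_neg, zpow_natCast, zpow_natCast]
    rw [div_mul_eq_mul_div, div_mul_eq_mul_div, div_mul_eq_mul_div]
    ring
  · intro m hm hm2
    rw [Finset.mem_range] at hm hm2
    rw [ph_eq_zero 1 p hp k m (by omega), mul_zero]

lemma id1 (q : ℂ) (hq : q ≠ 0) (k d : ℕ) : ∀ i, k = d + i →
    qp ((q ^ 2) ^ k)⁻¹ (q ^ 2) d * qp (q ^ 2) (q ^ 2) i * q ^ (2 * k * d + d) =
      (-1) ^ d * q ^ (d * d) * qp (q ^ 2) (q ^ 2) k := by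
  induction d with
  | zero => intro i h; simp [qp_zero, h]
  | succ d ih =>
    intro i h
    have h0 := ih (i + 1) (by omega)
    rw [qpp_succ] at h0
    rw [qp_succ]
    have e : (1 - ((q ^ 2) ^ k)⁻¹ * (q ^ 2) ^ d) * (q ^ 2) ^ k =
        -(q ^ 2) ^ d * (1 - (q ^ 2) ^ (i + 1)) := by
      have : (q ^ 2) ^ k ≠ 0 := pow_ne_zero _ (pow_ne_zero _ hq)
      rw [sub_mul, mul_right_comm, inv_mul_cancel₀ this, h]
      ring
    have e1 : q ^ (2 * k * (d + 1) + (d + 1)) = q ^ (2 * k * d + d) * (q ^ 2) ^ k * q := by ring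
    have e2 : q ^ ((d + 1) * (d + 1)) = q ^ (d * d) * (q ^ 2) ^ d * q := by ring
    rw [e1, e2]
    generalize (q ^ 2) ^ k = Q at *
    rw [pow_succ (-1 : ℂ)]
    linear_combination (qp Q⁻¹ (q ^ 2) d * qp (q ^ 2) (q ^ 2) i * q ^ (2 * k * d + d) * q) * e -
      (q ^ 2) ^ d * q * h0

lemma abs_lemma {Pk Pki P2k Pi Y X Yd D2 Bk R A D1 B u1 u2 u3 u4 PN t PNk nN xk φ sk sd si qE U W tw : ℂ}
    (hPk : Pk ≠ 0) (hP2k : P2k ≠ 0) (hPi : Pi ≠ 0) (hYd : Yd ≠ 0) (hD2 : D2 ≠ 0)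
    (hD1 : D1 ≠ 0) (h1 : u1 ≠ 0) (h4 : u4 ≠ 0) (hPN : PN ≠ 0) (ht : t ≠ 0)
    (hnN : nN ≠ 0) (hxk : xk ≠ 0) (hsi : si * si = 1)
    (e1 : A * Pi * u1 = sd * u2 * Pk) (e2 : B * Pk = PN) (e3 : Bk * (P2k * t) = PNk)
    (e4 : φ * D1 * u3 = si * u4 * Pki) (e5 : PNk = PN * nN * xk) (es : sk * sd * si = 1)
    (eU : qE * u2 * u3 = U * W * u1 * u4) :
    sk * qE * (Pk * Pki / (P2k * Pi)) * (Y * X / (Pk * Yd)) * (D2 / Bk) * R * (A / D1 * (B / D2) * tw)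
      = tw * (U / (Pi ^ 2 * nN)) * (W * t * Y * X / (Yd * xk) * φ * R) := by
  have eA : A = sd * u2 * Pk / (Pi * u1) := by rw [eq_div_iff (by positivity)]; linear_combination e1
  have eB : B = PN / Pk := by rw [eq_div_iff hPk]; exact e2
  have eBk : Bk = PN * nN * xk / (P2k * t) := by
    rw [eq_div_iff (by positivity)]; rw [e3, e5]
  have ePki : Pki = si * φ * D1 * u3 / u4 := by
    rw [eq_div_iff h4]; linear_combination -(si) * e4 - Pki * u4 * hsi
  rw [eA, eB, eBk, ePki]
  have hs : sk * sd * si * (qE * u2 * u3) = U * W * u1 * u4 := by rw [es, eU]; ring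
  field_simp
  linear_combination (φ * Y * X * R * tw) * hs

lemma cf_top (q : ℂ) (hq : q ≠ 0) (hP : ∀ m : ℕ, 0 < m → (q ^ 2) ^ m ≠ 1) (L n i j d M k : ℕ)
    (hk : k = i + d) (hN : n + j = k + M) :
    cf q L n i j k * (qp ((q ^ 2) ^ k)⁻¹ (q ^ 2) d / qp (q ^ 2) (q ^ 2) d *
      (qp ((q ^ 2) ^ (k + 1)) (q ^ 2) M / qp (q ^ 2) (q ^ 2) M) * 2 ^ (d + M)) =
    2 ^ (d + M) * (q ^ (n + j + i) / (qp (q ^ 2) (q ^ 2) i ^ 2 * (1 - (q ^ 2) ^ (n + j + 1)))) *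
      (wt (q ^ 2) ((q ^ 2) ^ (n + j)) ((q ^ 2) ^ L) k * ph 1 (q ^ 2) ((q ^ 2) ^ k) i *
        Rf (q ^ 2) ((q ^ 2) ^ L)⁻¹ ((q ^ 2) ^ (n + j))⁻¹ j ((q ^ 2) ^ k)) := by
  have hp : q ^ 2 ≠ 0 := pow_ne_zero _ hq
  have hpp : ∀ m, qp (q ^ 2) (q ^ 2) m ≠ 0 := fun m => by
    have := qpw_ne (q ^ 2) hP 1 m one_pos
    rwa [pow_one] at this
  have hadd : ∀ a b, qp (q ^ 2) (q ^ 2) (a + b) =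
      qp (q ^ 2) (q ^ 2) a * qp ((q ^ 2) ^ (a + 1)) (q ^ 2) b := fun a b => by
    rw [qp_add, ← pow_succ']
  rw [cf, racah_eq (q ^ 2) _ _ hp L (n + j) k j (zneg _ _ _ (by push_cast; ring))
    (zneg _ _ _ (by push_cast; ring)), zneg q (-(2 * (L : ℤ))) L rfl,
    zneg q (-(2 * (j : ℤ) + 2 * (n : ℤ))) (n + j) (by push_cast; ring),
    zpos q (2 * (L : ℤ) + 4) (L + 2) (by push_cast; ring),
    zpos q (4 * (k : ℤ) + 4) (2 * k + 1 + 1) (by push_cast; ring),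
    show n + j - k = M by omega, wt, ← pow_add, ← pow_add]
  refine abs_lemma (u1 := q ^ (2 * k * d + d)) (u2 := q ^ (d * d)) (u3 := q ^ (2 * k * i + i))
    (u4 := q ^ (i * i)) (PN := qp (q ^ 2) (q ^ 2) (n + j)) (PNk := qp (q ^ 2) (q ^ 2) (n + j + 1 + k))
    (si := (-1) ^ i) (sd := (-1) ^ d)
    (hpp _) (hpp _) (hpp _)
    (qpw_ne _ hP _ _ (by omega)) (hpp _) (hpp _) (pow_ne_zero _ hq)
    (pow_ne_zero _ hq) (hpp _) (minus_ne _ hP _ (by omega)) (minus_ne _ hP _ (by omega))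
    (qpw_ne _ hP _ _ (by omega)) ?_ (id1 q hq k d i (by omega)) ?_ ?_ ?_ ?_ ?_ ?_
  · rw [← pow_add, ← two_mul, pow_mul]; simp
  · rw [hN, hadd]; ring
  · rw [show n + j + 1 + k = (2 * k + 1) + M by omega, hadd (2 * k + 1), qpp_succ]; ring
  · have h1 := id1 q hq k i d (by omega)
    have h2 := hadd k i
    rw [ph, h2, one_mul, ← pow_succ]
    linear_combination qp ((q ^ 2) ^ (k + 1)) (q ^ 2) i * h1
  · rw [hadd, qpp_succ]
  · rw [← pow_add, ← pow_add, hk, show i + d + d + i = 2 * (i + d) by ring, pow_mul]; simp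
  · rw [← pow_mul, ← pow_mul, ← pow_add, ← pow_add, ← pow_mul]
    simp only [← zpow_natCast, ← zpow_add₀ hq]
    congr 1
    rw [hk]
    push_cast
    ring

lemma PP_deg (q : ℂ) (L : ℕ) (C : ℂ → ℂ → ℕ → Polynomial ℂ) (hC : IsUltra C) (n i j : ℕ) :
    (PP q L C n i j).natDegree ≤ n + j - i := by
  apply Polynomial.natDegree_sum_le_of_forall_le
  intro k hk
  rw [Finset.mem_Icc] at hk
  have h1 := C_natDegree C hC (q ^ 2) (q ^ (-(2 * (k : ℤ)))) (k - i)
  have h2 := C_natDegree C hC (q ^ 2) (q ^ (2 * (k : ℤ) + 2)) (n + j - k)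
  refine (Polynomial.natDegree_C_mul_le _ _).trans (Polynomial.natDegree_mul_le.trans ?_)
  omega

lemma PP_top (q : ℂ) (hq : q ≠ 0) (hP : ∀ m : ℕ, 0 < m → (q ^ 2) ^ m ≠ 1) (L : ℕ)
    (C : ℂ → ℂ → ℕ → Polynomial ℂ) (hC : IsUltra C) (n i j : ℕ) :
    (PP q L C n i j).coeff (n + j - i) = 2 ^ (n + j - i) *
      (q ^ (n + j + i) / (qp (q ^ 2) (q ^ 2) i ^ 2 * (1 - (q ^ 2) ^ (n + j + 1)))) *
      TT (q ^ 2) L (n + j) i j := by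
  have hp : q ^ 2 ≠ 0 := pow_ne_zero _ hq
  have hsub : Finset.Icc i (min L (n + j)) ⊆ Finset.range (L + 1) := by
    intro k hk
    rw [Finset.mem_Icc] at hk
    rw [Finset.mem_range]; omega
  rw [TT, ← Finset.sum_subset hsub, PP, Polynomial.finsetSum_coeff, Finset.mul_sum]
  · apply Finset.sum_congr rfl
    intro k hk
    rw [Finset.mem_Icc] at hk
    have h1 := C_natDegree C hC (q ^ 2) (q ^ (-(2 * (k : ℤ)))) (k - i)
    have h2 := C_natDegree C hC (q ^ 2) (q ^ (2 * (k : ℤ) + 2)) (n + j - k)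
    rw [Polynomial.coeff_C_mul, show n + j - i = (k - i) + (n + j - k) by omega,
      Polynomial.coeff_mul_add_eq_of_natDegree_le h1 h2, C_top C hC, C_top C hC,
      ← cf_top q hq hP L n i j (k - i) (n + j - k) k (by omega) (by omega),
      zneg q _ k rfl, zpos q (2 * (k : ℤ) + 2) (k + 1) (by push_cast; ring), pow_add]
    ring
  · intro k hk hk2
    rw [Finset.mem_range] at hk
    rw [Finset.mem_Icc] at hk2
    by_cases hki : k < i
    · rw [ph_eq_zero 1 _ hp k i hki]; ring
    · have : qp ((q ^ 2) ^ (n + j))⁻¹ (q ^ 2) k = 0 := by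
        rw [show k = (n + j) + 1 + (k - (n + j + 1)) by omega, qp_add, qp_succ,
          inv_mul_cancel₀ (pow_ne_zero _ hp)]
        ring
      rw [wt, this]; ring

def uc (p β : ℂ) (s : ℕ) : ℂ := qp β p s / qp p p s

def ua (p β : ℂ) (d : ℕ) (t : ℂ) : ℂ :=
  ∑ s ∈ Finset.range (d + 1), uc p β s * uc p β (d - s) * t ^ s

lemma uc_succ (p β : ℂ) (hP : ∀ m : ℕ, 0 < m → p ^ m ≠ 1) (s : ℕ) :
    uc p β (s + 1) * (1 - p ^ (s + 1)) = uc p β s * (1 - β * p ^ s) := by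
  have h1 := minus_ne p hP (s + 1) (by omega)
  have h2 : qp p p s ≠ 0 := by
    have := qpw_ne p hP 1 s one_pos
    rwa [pow_one] at this
  rw [uc, uc, qpp_succ, qp_succ]
  field_simp

def ev (f : Polynomial ℂ) (z : ℂ) : ℂ := f.eval ((z + z⁻¹) / 2)

lemma ev_C (C : ℂ → ℂ → ℕ → Polynomial ℂ) (hC : IsUltra C) (p β : ℂ) (d : ℕ) (z : ℂ) (hz : z ≠ 0) :
    ev (C p β d) z = (z ^ d)⁻¹ * ua p β d (z ^ 2) := by
  have hs : (z + z⁻¹) / 2 = (z⁻¹ + z⁻¹⁻¹) / 2 := by rw [inv_inv, add_comm]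
  rw [ev, hs, (hC p β d).2 z⁻¹ (inv_ne_zero hz), ua, Finset.mul_sum]
  apply Finset.sum_congr rfl
  intro r hr
  have : z⁻¹ ^ ((d : ℤ) - 2 * r) = (z ^ d)⁻¹ * (z ^ 2) ^ r := by
    rw [_root_.inv_zpow, zpow_sub₀ hz, ← pow_mul, inv_div, div_eq_mul_inv, mul_comm, zpow_natCast]
    norm_cast
  rw [this, uc, uc]
  ring

lemma ua_a (p β : ℂ) (hp : p ≠ 0) (hβ : β ≠ 0) (hP : ∀ m : ℕ, 0 < m → p ^ m ≠ 1) (D : ℕ) (t : ℂ) :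
    (1 - (p ^ D)⁻¹ * β⁻¹ * t) * ua p β (D + 1) (p * t) -
      (β - (p ^ D)⁻¹ * β⁻¹) * t * ua p β D (p * t) =
    (1 - p * β⁻¹ * t) * ua p β (D + 1) t := by
  have h1 : ∑ s ∈ Finset.range (D + 1 + 1), uc p β s * uc p β (D + 1 - s) * (p ^ s - 1) * t ^ s =
      ∑ r ∈ Finset.range (D + 1), uc p β (r + 1) * uc p β (D - r) * (p ^ (r + 1) - 1) * t ^ (r + 1) := by
    rw [Finset.sum_range_succ']
    simp
  have h2 : ∑ s ∈ Finset.range (D + 1 + 1), uc p β s * uc p β (D + 1 - s) *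
        (p * β⁻¹ - (p ^ D)⁻¹ * β⁻¹ * p ^ s) * t ^ (s + 1) =
      ∑ s ∈ Finset.range (D + 1), uc p β s * uc p β (D + 1 - s) *
        (p * β⁻¹ - (p ^ D)⁻¹ * β⁻¹ * p ^ s) * t ^ (s + 1) := by
    rw [Finset.sum_range_succ]
    have : p * β⁻¹ - (p ^ D)⁻¹ * β⁻¹ * p ^ (D + 1) = 0 := by
      have := pow_ne_zero D hp
      rw [pow_succ]; field_simp; ring
    rw [this]; ring
  have h3 : (1 - (p ^ D)⁻¹ * β⁻¹ * t) * ua p β (D + 1) (p * t) - (1 - p * β⁻¹ * t) * ua p β (D + 1) t =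
      (∑ s ∈ Finset.range (D + 1 + 1), uc p β s * uc p β (D + 1 - s) * (p ^ s - 1) * t ^ s) +
      ∑ s ∈ Finset.range (D + 1 + 1), uc p β s * uc p β (D + 1 - s) *
        (p * β⁻¹ - (p ^ D)⁻¹ * β⁻¹ * p ^ s) * t ^ (s + 1) := by
    rw [ua, ua, Finset.mul_sum, Finset.mul_sum, ← Finset.sum_sub_distrib, ← Finset.sum_add_distrib]
    apply Finset.sum_congr rfl
    intro s _
    rw [mul_pow, pow_succ t s]; ring
  rw [h1, h2, ← Finset.sum_add_distrib] at h3
  have h4 : (β - (p ^ D)⁻¹ * β⁻¹) * t * ua p β D (p * t) = ∑ r ∈ Finset.range (D + 1),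
      (uc p β (r + 1) * uc p β (D - r) * (p ^ (r + 1) - 1) * t ^ (r + 1) +
        uc p β r * uc p β (D + 1 - r) * (p * β⁻¹ - (p ^ D)⁻¹ * β⁻¹ * p ^ r) * t ^ (r + 1)) := by
    rw [ua, Finset.mul_sum]
    apply Finset.sum_congr rfl
    intro r hr
    have hr := Finset.mem_range.1 hr
    obtain ⟨e, rfl⟩ : ∃ e, D = r + e := ⟨D - r, by omega⟩
    rw [show r + e - r = e by omega, show r + e + 1 - r = e + 1 by omega]
    have g1 := uc_succ p β hP r
    have g2 := uc_succ p β hP e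
    have e1 := pow_ne_zero r hp
    have e2 := pow_ne_zero e hp
    have e3 : p * β⁻¹ - (p ^ (r + e))⁻¹ * β⁻¹ * p ^ r = -(p ^ e)⁻¹ * β⁻¹ * (1 - p ^ (e + 1)) := by
      rw [pow_add, pow_succ]; field_simp; ring
    have e4 : (p ^ e)⁻¹ * β⁻¹ * (1 - β * p ^ e) = (p ^ e)⁻¹ * β⁻¹ - 1 := by field_simp
    have e5 : (p ^ (r + e))⁻¹ * p ^ r = (p ^ e)⁻¹ := by rw [pow_add]; field_simp
    rw [e3, mul_pow, pow_succ t r]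
    linear_combination (uc p β e * t ^ r * t) * g1 + (uc p β r * (p ^ e)⁻¹ * β⁻¹ * t ^ r * t) * g2
      + (uc p β r * uc p β e * t ^ r * t) * e4 - (uc p β r * uc p β e * t ^ r * t * β⁻¹) * e5
  rw [h4]
  linear_combination h3

lemma ua_b (p β : ℂ) (hp : p ≠ 0) (hP : ∀ m : ℕ, 0 < m → p ^ m ≠ 1) (M : ℕ) (t : ℂ) :
    (1 - β * t) * ua p β M (p * t) - (t - β) * p ^ M * ua p β M (p⁻¹ * t) =
    (1 + β * p ^ M) * (1 - t) * ua p β M t := by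
  have h3 : (1 - β * t) * ua p β M (p * t) - (t - β) * p ^ M * ua p β M (p⁻¹ * t) -
      (1 + β * p ^ M) * (1 - t) * ua p β M t =
      (∑ s ∈ Finset.range (M + 1), -(uc p β s * uc p β (M - s) * (1 - p ^ s) *
        (1 - β * p ^ (M - s))) * t ^ s) +
      ∑ s ∈ Finset.range (M + 1), uc p β s * uc p β (M - s) *
        (1 - β * p ^ s) * (1 - p ^ (M - s)) * t ^ (s + 1) := by
    rw [ua, ua, ua, Finset.mul_sum, Finset.mul_sum, Finset.mul_sum, ← Finset.sum_sub_distrib,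
      ← Finset.sum_sub_distrib, ← Finset.sum_add_distrib]
    apply Finset.sum_congr rfl
    intro s hs
    have hs := Finset.mem_range.1 hs
    obtain ⟨e, rfl⟩ : ∃ e, M = s + e := ⟨M - s, by omega⟩
    rw [show s + e - s = e by omega, mul_pow, mul_pow, pow_succ t s, pow_add]
    have : p ^ s * p⁻¹ ^ s = 1 := by rw [← mul_pow, mul_inv_cancel₀ hp, one_pow]
    linear_combination (-(t - β) * p ^ e * uc p β s * uc p β e * t ^ s) * this
  rw [Finset.sum_range_succ', Finset.sum_range_succ _ M] at h3
  simp only [Nat.sub_self, pow_zero, sub_self, mul_zero, zero_mul, neg_zero, add_zero] at h3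
  rw [← Finset.sum_add_distrib, Finset.sum_eq_zero] at h3
  · linear_combination h3
  · intro r hr
    have hr := Finset.mem_range.1 hr
    obtain ⟨e, rfl⟩ : ∃ e, M = r + (e + 1) := ⟨M - r - 1, by omega⟩
    rw [show r + (e + 1) - (r + 1) = e by omega, show r + (e + 1) - r = e + 1 by omega]
    have g1 := uc_succ p β hP r
    have g2 := uc_succ p β hP e
    linear_combination (uc p β r * (1 - β * p ^ r) * t ^ (r + 1)) * g2 -
      (uc p β e * (1 - β * p ^ e) * t ^ (r + 1)) * g1

lemma ev_inv (f : Polynomial ℂ) (z : ℂ) : ev f z⁻¹ = ev f z := by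
  rw [ev, ev, inv_inv, add_comm]

lemma C_a (C : ℂ → ℂ → ℕ → Polynomial ℂ) (hC : IsUltra C) (q : ℂ) (hq : q ≠ 0)
    (hP : ∀ m : ℕ, 0 < m → (q ^ 2) ^ m ≠ 1) (i D : ℕ) (z : ℂ) (hz : z ≠ 0) :
    (1 - (q ^ 2) ^ (i + 1) * z ^ 2) * ev (C (q ^ 2) ((q ^ 2) ^ (i + 1 + D))⁻¹ (D + 1)) (q * z) -
      q⁻¹ * ((q ^ 2) ^ (i + 1 + D))⁻¹ * (1 - (q ^ 2) ^ (i + 1 + D + i + 1)) * z *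
        ev (C (q ^ 2) ((q ^ 2) ^ (i + 1 + D))⁻¹ D) (q * z) =
    (q ^ (D + 1))⁻¹ * (1 - (q ^ 2) ^ (i + 1 + D + 1) * z ^ 2) *
      ev (C (q ^ 2) ((q ^ 2) ^ (i + 1 + D))⁻¹ (D + 1)) z := by
  have hp : q ^ 2 ≠ 0 := pow_ne_zero _ hq
  have hqz := mul_ne_zero hq hz
  have h := ua_a (q ^ 2) ((q ^ 2) ^ (i + 1 + D))⁻¹ hp (inv_ne_zero (pow_ne_zero _ hp)) hP D (z ^ 2)
  rw [inv_inv] at h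
  have k1 : ((q ^ 2) ^ D)⁻¹ * (q ^ 2) ^ (i + 1 + D) = (q ^ 2) ^ (i + 1) := by
    rw [pow_add _ (i + 1) D]; field_simp
  have k2 : ((q ^ 2) ^ (i + 1 + D))⁻¹ - (q ^ 2) ^ (i + 1) =
      ((q ^ 2) ^ (i + 1 + D))⁻¹ * (1 - (q ^ 2) ^ (i + 1 + D + i + 1)) := by
    have := pow_ne_zero (i + 1 + D) hp
    rw [show i + 1 + D + i + 1 = (i + 1 + D) + (i + 1) by ring, pow_add _ (i + 1 + D)]
    field_simp
  rw [k1, k2, ← pow_succ' (q ^ 2)] at h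
  rw [ev_C C hC _ _ _ _ hqz, ev_C C hC _ _ _ _ hqz, ev_C C hC _ _ _ _ hz, mul_pow q z 2]
  generalize ua (q ^ 2) ((q ^ 2) ^ (i + 1 + D))⁻¹ (D + 1) (q ^ 2 * z ^ 2) = X1 at *
  generalize ua (q ^ 2) ((q ^ 2) ^ (i + 1 + D))⁻¹ D (q ^ 2 * z ^ 2) = X2 at *
  generalize ua (q ^ 2) ((q ^ 2) ^ (i + 1 + D))⁻¹ (D + 1) (z ^ 2) = X3 at *
  have e1 : ((q * z) ^ D)⁻¹ = q * z * ((q * z) ^ (D + 1))⁻¹ := by rw [pow_succ]; field_simp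
  have e2 : (q ^ (D + 1))⁻¹ * (z ^ (D + 1))⁻¹ = ((q * z) ^ (D + 1))⁻¹ := by
    rw [mul_pow, mul_inv]
  have e3 : q⁻¹ * q = 1 := inv_mul_cancel₀ hq
  rw [e1]
  linear_combination ((q * z) ^ (D + 1))⁻¹ * h - (((q ^ 2) ^ (i + 1 + D))⁻¹ *
    (1 - (q ^ 2) ^ (i + 1 + D + i + 1)) * z ^ 2 * X2 * ((q * z) ^ (D + 1))⁻¹) * e3 -
    ((1 - (q ^ 2) ^ (i + 1 + D + 1) * z ^ 2) * X3) * e2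

lemma C_b (C : ℂ → ℂ → ℕ → Polynomial ℂ) (hC : IsUltra C) (q β : ℂ) (hq : q ≠ 0)
    (hP : ∀ m : ℕ, 0 < m → (q ^ 2) ^ m ≠ 1) (M : ℕ) (z : ℂ) (hz : z ≠ 0) :
    (1 - β * z ^ 2) * ev (C (q ^ 2) β M) (q * z) - (z ^ 2 - β) * ev (C (q ^ 2) β M) (q⁻¹ * z) =
      ((q ^ M)⁻¹ + β * q ^ M) * (1 - z ^ 2) * ev (C (q ^ 2) β M) z := by
  have hp : q ^ 2 ≠ 0 := pow_ne_zero _ hq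
  have hqz := mul_ne_zero hq hz
  have hqz' := mul_ne_zero (inv_ne_zero hq) hz
  have h := ua_b (q ^ 2) β hp hP M (z ^ 2)
  rw [ev_C C hC _ _ _ _ hqz, ev_C C hC _ _ _ _ hqz', ev_C C hC _ _ _ _ hz, mul_pow q z 2,
    mul_pow q⁻¹ z 2, inv_pow]
  generalize ua (q ^ 2) β M (q ^ 2 * z ^ 2) = X1 at *
  generalize ua (q ^ 2) β M ((q ^ 2)⁻¹ * z ^ 2) = X2 at *
  generalize ua (q ^ 2) β M (z ^ 2) = X3 at *
  rw [← pow_mul, mul_comm 2 M, pow_mul] at h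
  rw [mul_pow, mul_pow, inv_pow]
  have e1 := pow_ne_zero M hq
  have e2 := pow_ne_zero M hz
  field_simp
  linear_combination h

lemma cf_succ (q : ℂ) (hq : q ≠ 0) (hP : ∀ m : ℕ, 0 < m → (q ^ 2) ^ m ≠ 1) (L n i j k : ℕ) :
    cf q L n i j k * (q⁻¹ * ((q ^ 2) ^ k)⁻¹ * (1 - (q ^ 2) ^ (k + i + 1))) =
      cf q L n (i + 1) j k * (1 - (q ^ 2) ^ (i + 1)) := by
  have h1 : qp (q ^ 2) (q ^ 2) (i + 1) ≠ 0 := by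
    have := qpw_ne (q ^ 2) hP 1 (i + 1) one_pos
    rwa [pow_one] at this
  have e : q ^ ((n : ℤ) + (2 * (k : ℤ) + 1) * ((k : ℤ) - ((i + 1 : ℕ) : ℤ)) +
                (j : ℤ) * (2 * (k : ℤ) + 1) + 2 * (k : ℤ) * ((L : ℤ) + (n : ℤ) + 1) -
                (k : ℤ) ^ 2) = q ^ ((n : ℤ) + (2 * (k : ℤ) + 1) * ((k : ℤ) - (i : ℤ)) +
                (j : ℤ) * (2 * (k : ℤ) + 1) + 2 * (k : ℤ) * ((L : ℤ) + (n : ℤ) + 1) -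
                (k : ℤ) ^ 2) * (q⁻¹ * ((q ^ 2) ^ k)⁻¹) := by
    rw [← mul_inv, ← pow_mul, ← pow_succ', ← zpow_natCast, ← _root_.zpow_neg, ← zpow_add₀ hq]
    congr 1
    push_cast
    ring
  rw [cf, cf, e, ← add_assoc k i 1, qpp_succ (q ^ 2) (k + i)]
  rw [qpp_succ] at h1 ⊢
  obtain ⟨h2, h3⟩ := mul_ne_zero_iff.1 h1
  have e2 : qp (q ^ 2) (q ^ 2) k * (qp (q ^ 2) (q ^ 2) (k + i) * (1 - (q ^ 2) ^ (k + i + 1))) /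
      (qp (q ^ 2) (q ^ 2) (2 * k) * (qp (q ^ 2) (q ^ 2) i * (1 - (q ^ 2) ^ (i + 1)))) =
      qp (q ^ 2) (q ^ 2) k * qp (q ^ 2) (q ^ 2) (k + i) /
      (qp (q ^ 2) (q ^ 2) (2 * k) * qp (q ^ 2) (q ^ 2) i) *
        ((1 - (q ^ 2) ^ (k + i + 1)) / (1 - (q ^ 2) ^ (i + 1))) := by
    rw [div_mul_div_comm]
    congr 1 <;> ring
  have e3 : (1 - (q ^ 2) ^ (k + i + 1)) =
      ((1 - (q ^ 2) ^ (k + i + 1)) / (1 - (q ^ 2) ^ (i + 1))) * (1 - (q ^ 2) ^ (i + 1)) :=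
    (div_mul_cancel₀ _ h3).symm
  rw [e2]
  generalize ((1 - (q ^ 2) ^ (k + i + 1)) / (1 - (q ^ 2) ^ (i + 1))) = W at *
  rw [e3]
  ring

lemma ev_mul (f g : Polynomial ℂ) (z : ℂ) : ev (f * g) z = ev f z * ev g z := by
  simp [ev]

lemma ev_PP (q : ℂ) (L : ℕ) (C : ℂ → ℂ → ℕ → Polynomial ℂ) (n i j : ℕ) (z : ℂ) :
    ev (PP q L C n i j) z = ∑ k ∈ Finset.Icc i (min L (n + j)), cf q L n i j k *
      (ev (C (q ^ 2) ((q ^ 2) ^ k)⁻¹ (k - i)) z * ev (C (q ^ 2) ((q ^ 2) ^ (k + 1)) (n + j - k)) z) := by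
  rw [ev, PP, Polynomial.eval_finsetSum]
  apply Finset.sum_congr rfl
  intro k _
  rw [Polynomial.eval_mul, Polynomial.eval_C, Polynomial.eval_mul, zneg q _ k rfl,
    zpos q (2 * (k : ℤ) + 2) (k + 1) (by push_cast; ring), ev, ev]

lemma C_zero (C : ℂ → ℂ → ℕ → Polynomial ℂ) (hC : IsUltra C) (p β z : ℂ) (hz : z ≠ 0) :
    ev (C p β 0) z = 1 := by
  rw [ev_C C hC _ _ _ _ hz]
  simp [ua, uc, qp_zero]

/-- one summand of the functional equation, top case -/
lemma term_zero (C : ℂ → ℂ → ℕ → Polynomial ℂ) (hC : IsUltra C) (q : ℂ) (hq : q ≠ 0)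
    (hP : ∀ m : ℕ, 0 < m → (q ^ 2) ^ m ≠ 1) (i N : ℕ) (hi : i ≤ N) (z : ℂ) (hz : z ≠ 0) (β : ℂ) :
    (1 - (q ^ 2) ^ (i + 1) * z ^ 2) * (ev (C (q ^ 2) β 0) (q * z) *
        ev (C (q ^ 2) ((q ^ 2) ^ (i + 1)) (N - i)) (q * z)) -
      (z ^ 2 - (q ^ 2) ^ (i + 1)) * (ev (C (q ^ 2) β 0) (q⁻¹ * z) *
        ev (C (q ^ 2) ((q ^ 2) ^ (i + 1)) (N - i)) (q⁻¹ * z)) =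
      q ^ i * ((q ^ N)⁻¹ + q ^ (N + 2)) * (1 - z ^ 2) *
        (ev (C (q ^ 2) β 0) z * ev (C (q ^ 2) ((q ^ 2) ^ (i + 1)) (N - i)) z) := by
  have h := C_b C hC q ((q ^ 2) ^ (i + 1)) hq hP (N - i) z hz
  rw [C_zero C hC _ _ _ hz, C_zero C hC _ _ _ (mul_ne_zero hq hz),
    C_zero C hC _ _ _ (mul_ne_zero (inv_ne_zero hq) hz), one_mul, one_mul, one_mul, h]
  obtain ⟨M, rfl⟩ : ∃ M, N = i + M := ⟨N - i, by omega⟩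
  rw [show i + M - i = M by omega]
  have e : (q ^ M)⁻¹ = q ^ i * (q ^ (i + M))⁻¹ := by rw [pow_add]; field_simp
  rw [e]
  ring

lemma term_succ (C : ℂ → ℂ → ℕ → Polynomial ℂ) (hC : IsUltra C) (q : ℂ) (hq : q ≠ 0)
    (hP : ∀ m : ℕ, 0 < m → (q ^ 2) ^ m ≠ 1) (i N k : ℕ) (hk : i + 1 ≤ k) (hN : k ≤ N) (z : ℂ)
    (hz : z ≠ 0) :
    (1 - (q ^ 2) ^ (i + 1) * z ^ 2) * (ev (C (q ^ 2) ((q ^ 2) ^ k)⁻¹ (k - i)) (q * z) *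
        ev (C (q ^ 2) ((q ^ 2) ^ (k + 1)) (N - k)) (q * z)) -
      (z ^ 2 - (q ^ 2) ^ (i + 1)) * (ev (C (q ^ 2) ((q ^ 2) ^ k)⁻¹ (k - i)) (q⁻¹ * z) *
        ev (C (q ^ 2) ((q ^ 2) ^ (k + 1)) (N - k)) (q⁻¹ * z)) =
      q ^ i * ((q ^ N)⁻¹ + q ^ (N + 2)) * (1 - z ^ 2) *
        (ev (C (q ^ 2) ((q ^ 2) ^ k)⁻¹ (k - i)) z * ev (C (q ^ 2) ((q ^ 2) ^ (k + 1)) (N - k)) z) +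
      (q⁻¹ * ((q ^ 2) ^ k)⁻¹ * (1 - (q ^ 2) ^ (k + i + 1))) * z *
        (ev (C (q ^ 2) ((q ^ 2) ^ k)⁻¹ (k - (i + 1))) (q * z) *
          ev (C (q ^ 2) ((q ^ 2) ^ (k + 1)) (N - k)) (q * z) -
         ev (C (q ^ 2) ((q ^ 2) ^ k)⁻¹ (k - (i + 1))) (q⁻¹ * z) *
          ev (C (q ^ 2) ((q ^ 2) ^ (k + 1)) (N - k)) (q⁻¹ * z)) := by
  have hb := C_b C hC q ((q ^ 2) ^ (k + 1)) hq hP (N - k) z hz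
  obtain ⟨D, rfl⟩ : ∃ D, k = i + 1 + D := ⟨k - (i + 1), by omega⟩
  have ha := C_a C hC q hq hP i D z hz
  have ha' := C_a C hC q hq hP i D z⁻¹ (inv_ne_zero hz)
  have hinv : q * z⁻¹ = (q⁻¹ * z)⁻¹ := by rw [mul_inv, inv_inv]
  rw [hinv, ev_inv, ev_inv, ev_inv] at ha'
  obtain ⟨M, rfl⟩ : ∃ M, N = i + 1 + D + M := ⟨N - (i + 1 + D), by omega⟩
  rw [show i + 1 + D + M - (i + 1 + D) = M by omega] at *
  rw [show i + 1 + D - (i + 1) = D by omega, show i + 1 + D - i = D + 1 by omega]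
  have e : q ^ i * ((q ^ (i + 1 + D + M))⁻¹ + q ^ (i + 1 + D + M + 2)) =
      (q ^ (D + 1))⁻¹ * ((q ^ M)⁻¹ + (q ^ 2) ^ (i + 1 + D + 1) * q ^ M) := by
    simp only [← pow_mul, pow_add, mul_add]
    field_simp
    ring
  rw [e]
  generalize q⁻¹ * ((q ^ 2) ^ (i + 1 + D))⁻¹ * (1 - (q ^ 2) ^ (i + 1 + D + i + 1)) = ε at *
  generalize ev (C (q ^ 2) ((q ^ 2) ^ (i + 1 + D))⁻¹ (D + 1)) (q * z) = a1 at *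
  generalize ev (C (q ^ 2) ((q ^ 2) ^ (i + 1 + D))⁻¹ (D + 1)) (q⁻¹ * z) = a2 at *
  generalize ev (C (q ^ 2) ((q ^ 2) ^ (i + 1 + D))⁻¹ (D + 1)) z = a3 at *
  generalize ev (C (q ^ 2) ((q ^ 2) ^ (i + 1 + D))⁻¹ D) (q * z) = b1 at *
  generalize ev (C (q ^ 2) ((q ^ 2) ^ (i + 1 + D))⁻¹ D) (q⁻¹ * z) = b2 at *
  generalize ev (C (q ^ 2) ((q ^ 2) ^ (i + 1 + D + 1)) M) (q * z) = v1 at *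
  generalize ev (C (q ^ 2) ((q ^ 2) ^ (i + 1 + D + 1)) M) (q⁻¹ * z) = v2 at *
  generalize ev (C (q ^ 2) ((q ^ 2) ^ (i + 1 + D + 1)) M) z = v3 at *
  generalize (q ^ 2) ^ (i + 1) = A at *
  generalize (q ^ 2) ^ (i + 1 + D + 1) = B at *
  generalize (q ^ (D + 1))⁻¹ = s at *
  have z1 : z * z⁻¹ = 1 := mul_inv_cancel₀ hz
  have ha2 : (z ^ 2 - A) * a2 - ε * z * b2 = s * (z ^ 2 - B) * a3 := by
    have := congrArg (fun t => z ^ 2 * t) ha'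
    simp only [inv_pow] at this
    field_simp at this
    linear_combination this
  linear_combination v1 * ha - v2 * ha2 + s * a3 * hb

lemma sum_split (s : Finset ℕ) (c c' f1 f2 f3 g1 g2 : ℕ → ℂ) (A B D E : ℂ) :
    ∑ k ∈ s, (c k * (A * f1 k - B * f2 k - D * f3 k) - c' k * (E * (g1 k - g2 k))) =
      A * (∑ k ∈ s, c k * f1 k) - B * (∑ k ∈ s, c k * f2 k) - D * (∑ k ∈ s, c k * f3 k) -
        E * ((∑ k ∈ s, c' k * g1 k) - ∑ k ∈ s, c' k * g2 k) := by
  rw [← Finset.sum_sub_distrib]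
  simp only [Finset.mul_sum]
  simp only [← Finset.sum_sub_distrib]
  apply Finset.sum_congr rfl
  intro k _
  ring

lemma PP_FE (C : ℂ → ℂ → ℕ → Polynomial ℂ) (hC : IsUltra C) (q : ℂ) (hq : q ≠ 0)
    (hP : ∀ m : ℕ, 0 < m → (q ^ 2) ^ m ≠ 1) (L n i j : ℕ) (z : ℂ) (hz : z ≠ 0) :
    (1 - (q ^ 2) ^ (i + 1) * z ^ 2) * ev (PP q L C n i j) (q * z) -
      (z ^ 2 - (q ^ 2) ^ (i + 1)) * ev (PP q L C n i j) (q⁻¹ * z) =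
    q ^ i * ((q ^ (n + j))⁻¹ + q ^ (n + j + 2)) * (1 - z ^ 2) * ev (PP q L C n i j) z +
      (1 - (q ^ 2) ^ (i + 1)) * z * (ev (PP q L C n (i + 1) j) (q * z) -
        ev (PP q L C n (i + 1) j) (q⁻¹ * z)) := by
  simp only [ev_PP]
  by_cases hi : i ≤ min L (n + j)
  · rw [← Finset.insert_Icc_add_one_left_eq_Icc hi]
    have hni : i ∉ Finset.Icc (i + 1) (min L (n + j)) := by simp
    rw [Finset.sum_insert hni, Finset.sum_insert hni, Finset.sum_insert hni, Nat.sub_self]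
    have h0 := term_zero C hC q hq hP i (n + j) (by omega) z hz ((q ^ 2) ^ i)⁻¹
    rw [← sub_eq_zero]
    have hs : ∑ k ∈ Finset.Icc (i + 1) (min L (n + j)), (cf q L n i j k * (
      (1 - (q ^ 2) ^ (i + 1) * z ^ 2) * (ev (C (q ^ 2) ((q ^ 2) ^ k)⁻¹ (k - i)) (q * z) *
        ev (C (q ^ 2) ((q ^ 2) ^ (k + 1)) (n + j - k)) (q * z)) -
      (z ^ 2 - (q ^ 2) ^ (i + 1)) * (ev (C (q ^ 2) ((q ^ 2) ^ k)⁻¹ (k - i)) (q⁻¹ * z) *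
        ev (C (q ^ 2) ((q ^ 2) ^ (k + 1)) (n + j - k)) (q⁻¹ * z)) -
      q ^ i * ((q ^ (n + j))⁻¹ + q ^ (n + j + 2)) * (1 - z ^ 2) *
        (ev (C (q ^ 2) ((q ^ 2) ^ k)⁻¹ (k - i)) z *
          ev (C (q ^ 2) ((q ^ 2) ^ (k + 1)) (n + j - k)) z)) -
      cf q L n (i + 1) j k * ((1 - (q ^ 2) ^ (i + 1)) * z *
        (ev (C (q ^ 2) ((q ^ 2) ^ k)⁻¹ (k - (i + 1))) (q * z) *
          ev (C (q ^ 2) ((q ^ 2) ^ (k + 1)) (n + j - k)) (q * z) -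
         ev (C (q ^ 2) ((q ^ 2) ^ k)⁻¹ (k - (i + 1))) (q⁻¹ * z) *
          ev (C (q ^ 2) ((q ^ 2) ^ (k + 1)) (n + j - k)) (q⁻¹ * z)))) = 0 := by
      apply Finset.sum_eq_zero
      intro k hk
      rw [Finset.mem_Icc] at hk
      have h1 := term_succ C hC q hq hP i (n + j) k hk.1 (by omega) z hz
      have h2 := cf_succ q hq hP L n i j k
      rw [h1]
      linear_combination (z * (ev (C (q ^ 2) ((q ^ 2) ^ k)⁻¹ (k - (i + 1))) (q * z) *
          ev (C (q ^ 2) ((q ^ 2) ^ (k + 1)) (n + j - k)) (q * z) -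
         ev (C (q ^ 2) ((q ^ 2) ^ k)⁻¹ (k - (i + 1))) (q⁻¹ * z) *
          ev (C (q ^ 2) ((q ^ 2) ^ (k + 1)) (n + j - k)) (q⁻¹ * z))) * h2
    rw [sum_split] at hs
    linear_combination hs + cf q L n i j i * h0
  · rw [Finset.Icc_eq_empty (by omega), Finset.Icc_eq_empty (by omega)]
    simp

lemma qpow_ne (q : ℂ) (hP : ∀ m : ℕ, 0 < m → (q ^ 2) ^ m ≠ 1) (m : ℕ) (hm : 0 < m) :
    q ^ m ≠ 1 := by
  intro h
  apply hP m hm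
  rw [← pow_mul, mul_comm, pow_mul, h, one_pow]

lemma lead_extract (f g : Polynomial ℂ) (q a lam : ℂ) (hq : q ≠ 0) (e : ℕ)
    (hf : f.natDegree ≤ e) (hg : g.natDegree ≤ e + 1) (hg0 : g.coeff (e + 1) = 0)
    (h : ∀ z : ℂ, z ≠ 0 → (1 - a * z ^ 2) * ev f (q * z) - (z ^ 2 - a) * ev f (q⁻¹ * z) =
      lam * (1 - z ^ 2) * ev f z + (1 - a) * z * (ev g (q * z) - ev g (q⁻¹ * z))) :
    ((q ^ e)⁻¹ + a * q ^ e - lam) * f.coeff e = 0 := by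
  have hk := eq_at_zero
    (fun w => (1 - a * w ^ 2) * (q ^ e)⁻¹ * Kf f e (q * w) - (w ^ 2 - a) * q ^ e * Kf f e (q⁻¹ * w))
    (fun w => lam * (1 - w ^ 2) * Kf f e w + (1 - a) * ((q ^ (e + 1))⁻¹ * Kf g (e + 1) (q * w)
      - q ^ (e + 1) * Kf g (e + 1) (q⁻¹ * w)))
    (by have := Kf_cont f e; fun_prop)
    (by have := Kf_cont f e; have := Kf_cont g (e + 1); fun_prop)
    (by
      intro w hw
      have h1 := h w hw
      have hqw := mul_ne_zero hq hw
      have hqw' := mul_ne_zero (inv_ne_zero hq) hw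
      rw [Kf_eval f e hf _ hqw, Kf_eval f e hf _ hqw', Kf_eval f e hf _ hw,
        Kf_eval g _ hg _ hqw, Kf_eval g _ hg _ hqw']
      simp only [ev] at h1
      simp only [mul_pow, inv_pow]
      have c1 : (q ^ e)⁻¹ * q ^ e = 1 := inv_mul_cancel₀ (pow_ne_zero _ hq)
      have c2 : (q ^ (e + 1))⁻¹ * q ^ (e + 1) = 1 := inv_mul_cancel₀ (pow_ne_zero _ hq)
      generalize f.eval ((q * w + (q * w)⁻¹) / 2) = A1 at *
      generalize f.eval ((q⁻¹ * w + (q⁻¹ * w)⁻¹) / 2) = A2 at *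
      generalize f.eval ((w + w⁻¹) / 2) = A3 at *
      generalize g.eval ((q * w + (q * w)⁻¹) / 2) = B1 at *
      generalize g.eval ((q⁻¹ * w + (q⁻¹ * w)⁻¹) / 2) = B2 at *
      generalize (q ^ e)⁻¹ = u1 at *
      generalize (q ^ (e + 1))⁻¹ = u2 at *
      generalize q ^ e = v1 at *
      generalize q ^ (e + 1) = v2 at *
      linear_combination w ^ e * h1 + ((1 - a * w ^ 2) * w ^ e * A1 - (w ^ 2 - a) * w ^ e * A2) * c1
        - (1 - a) * w ^ (e + 1) * (B1 - B2) * c2)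
  simp only [mul_zero, Kf_zero, hg0] at hk
  have h2 : (2 : ℂ) ^ e ≠ 0 := by positivity
  have h3 : f.coeff e / 2 ^ e * 2 ^ e = f.coeff e := div_mul_cancel₀ _ h2
  rw [← h3]
  linear_combination 2 ^ e * hk

lemma lam_ne (q : ℂ) (hq : q ≠ 0) (hP : ∀ m : ℕ, 0 < m → (q ^ 2) ^ m ≠ 1) (i e d : ℕ) (hd : 0 < d) :
    (q ^ e)⁻¹ + (q ^ 2) ^ (i + 1) * q ^ e -
      q ^ i * ((q ^ (i + e + d))⁻¹ + q ^ (i + e + d + 2)) ≠ 0 := by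
  intro h
  have h1 := qpow_ne q hP d hd
  have h2 := qpow_ne q hP (2 * i + 2 * e + 2 + d) (by omega)
  have key : (q ^ d - 1) * (1 - q ^ (2 * i + 2 * e + 2 + d)) = 0 := by
    have e1 := congrArg (fun t => t * q ^ (e + d)) h
    simp only [zero_mul] at e1
    rw [← e1]
    simp only [← pow_mul, pow_add]
    field_simp
    ring
  rcases mul_eq_zero.1 key with h3 | h3
  · exact h1 (sub_eq_zero.1 h3)
  · exact h2 (sub_eq_zero.1 h3).symm

lemma PP_upper (C : ℂ → ℂ → ℕ → Polynomial ℂ) (hC : IsUltra C) (q : ℂ) (hq : q ≠ 0)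
    (hP : ∀ m : ℕ, 0 < m → (q ^ 2) ^ m ≠ 1) (L n j : ℕ) (hj : j ≤ L) :
    ∀ d i : ℕ, i + d = j → ∀ m, n + i < m + j → (PP q L C n i j).coeff m = 0 := by
  intro d
  induction d with
  | zero =>
    intro i hi m hm
    apply Polynomial.coeff_eq_zero_of_natDegree_lt
    have := PP_deg q L C hC n i j
    omega
  | succ d ih =>
    intro i hi
    have hg := ih (i + 1) (by omega)
    have main : ∀ c m, m + c = n + j - i → n + i < m + j → (PP q L C n i j).coeff m = 0 := by
      intro c
      induction c using Nat.strong_induction_on with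
      | _ c ihc =>
        intro m hm hmn
        have hup : (PP q L C n i j).natDegree ≤ m := by
          rw [Polynomial.natDegree_le_iff_coeff_eq_zero]
          intro m' hm'
          by_cases hle : m' ≤ n + j - i
          · exact ihc (n + j - i - m') (by omega) m' (by omega) (by omega)
          · apply Polynomial.coeff_eq_zero_of_natDegree_lt
            have := PP_deg q L C hC n i j
            omega
        rcases Nat.eq_zero_or_pos c with hc | hc
        · have hm2 : m = n + j - i := by omega
          rw [hm2, PP_top q hq hP L C hC n i j, TT_zero (q ^ 2) (pow_ne_zero _ hq) hP L (n + j) i j hj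
            (by omega) (by omega), mul_zero]
        · have hgd : (PP q L C n (i + 1) j).natDegree ≤ m + 1 := by
            rw [Polynomial.natDegree_le_iff_coeff_eq_zero]
            intro m' hm'
            exact hg m' (by omega)
          have h := lead_extract _ _ q _ _ hq m hup hgd (hg (m + 1) (by omega))
            (fun z hz => PP_FE C hC q hq hP L n i j z hz)
          rw [show n + j = i + m + c by omega] at h
          exact (mul_eq_zero.1 h).resolve_left (lam_ne q hq hP i m c hc)
    intro m hm
    by_cases hle : m ≤ n + j - i
    · exact main (n + j - i - m) m (by omega) hm
    · apply Polynomial.coeff_eq_zero_of_natDegree_lt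
      have := PP_deg q L C hC n i j
      omega

lemma PP_degree (C : ℂ → ℂ → ℕ → Polynomial ℂ) (hC : IsUltra C) (q : ℂ) (hq : q ≠ 0)
    (hP : ∀ m : ℕ, 0 < m → (q ^ 2) ^ m ≠ 1) (L n i j : ℕ) (hj : j ≤ L) :
    (PP q L C n i j).natDegree ≤ n := by
  by_cases h : i ≤ j
  · rw [Polynomial.natDegree_le_iff_coeff_eq_zero]
    intro m hm
    exact PP_upper C hC q hq hP L n j hj (j - i) i (by omega) m (by omega)
  · have := PP_deg q L C hC n i j
    omega

lemma PP_offdiag (C : ℂ → ℂ → ℕ → Polynomial ℂ) (hC : IsUltra C) (q : ℂ) (hq : q ≠ 0)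
    (hP : ∀ m : ℕ, 0 < m → (q ^ 2) ^ m ≠ 1) (L n i j : ℕ) (hj : j ≤ L) (hij : i ≠ j) :
    (PP q L C n i j).coeff n = 0 := by
  by_cases h : i < j
  · exact PP_upper C hC q hq hP L n j hj (j - i) i (by omega) n (by omega)
  · by_cases hi : i ≤ n + j
    · apply Polynomial.coeff_eq_zero_of_natDegree_lt
      have := PP_deg q L C hC n i j
      omega
    · rw [PP, Finset.Icc_eq_empty (by omega)]
      simp

lemma qpp_add (p : ℂ) (a b : ℕ) : qp p p (a + b) = qp p p a * qp (p ^ (a + 1)) p b := by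
  induction b with
  | zero => simp [qp_zero]
  | succ b ih => rw [← add_assoc, qpp_succ, ih, qp_succ, ← pow_add]; ring_nf

lemma PP_diag (C : ℂ → ℂ → ℕ → Polynomial ℂ) (hC : IsUltra C) (q : ℂ) (hq : q ≠ 0)
    (hP : ∀ m : ℕ, 0 < m → (q ^ 2) ^ m ≠ 1) (m n j : ℕ) :
    (PP q (j + m) C n j j).coeff n = 2 ^ n * q ^ n * qp ((q ^ 2) ^ (j + 1)) (q ^ 2) n *
      qp ((q ^ 2) ^ (m + 1)) (q ^ 2) n /
      (qp (q ^ 2) (q ^ 2) n * qp ((q ^ 2) ^ (j + m + 2)) (q ^ 2) n) := by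
  have h := PP_top q hq hP (j + m) C hC n j j
  have hT := TT_diag (q ^ 2) (pow_ne_zero _ hq) hP j m n
  rw [Nat.add_sub_cancel, add_comm n j] at h
  rw [h]
  have ne : ∀ k, qp (q ^ 2) (q ^ 2) k ≠ 0 := fun k => by
    have := qpw_ne (q ^ 2) hP 1 k one_pos
    rwa [pow_one] at this
  have n1 := ne j
  have n2 := ne m
  have n3 := ne n
  have n4 := ne (j + m + 1)
  have n5 := minus_ne (q ^ 2) hP (j + n + 1) (by omega)
  have n6 := qpw_ne (q ^ 2) hP (j + m + 2) n (by omega)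
  have a1 := qpp_add (q ^ 2) j n
  have a2 := qpp_add (q ^ 2) m n
  have a3 := qpp_add (q ^ 2) (j + m + 1) n
  rw [show j + m + 1 + n = j + m + n + 1 by omega] at a3
  rw [show j + m + 1 + 1 = j + m + 2 by omega] at a3
  rw [a1, a2, a3] at hT
  have e : q ^ (j + n + j) = q ^ n * (q ^ 2) ^ j := by ring
  rw [e]
  generalize TT (q ^ 2) (j + m) (j + n) j j = T at *
  generalize qp (q ^ 2) (q ^ 2) j = x1 at *
  generalize qp (q ^ 2) (q ^ 2) m = x2 at *
  generalize qp (q ^ 2) (q ^ 2) n = x3 at *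
  generalize qp (q ^ 2) (q ^ 2) (j + m + 1) = x4 at *
  generalize 1 - (q ^ 2) ^ (j + n + 1) = x5 at *
  generalize qp ((q ^ 2) ^ (j + m + 2)) (q ^ 2) n = x6 at *
  generalize qp ((q ^ 2) ^ (j + 1)) (q ^ 2) n = y1 at *
  generalize qp ((q ^ 2) ^ (m + 1)) (q ^ 2) n = y2 at *
  generalize (q ^ 2) ^ j = Q at *
  have hT2 : T * (x3 * x6 * Q) = x1 ^ 2 * x5 * y1 * y2 := by
    apply mul_left_cancel₀ (mul_ne_zero n2 n4)
    linear_combination hT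
  field_simp
  linear_combination hT2

/-- each entry of `P_n` has degree at most `n`, the coefficient of `x^n`
in `P_n` is the diagonal matrix `Γ_n` with the stated entries, and this leading
coefficient is nonsingular; hence `P_n` has degree exactly `n` with nonsingular leading
coefficient. -/
theorem stmt1 (q : ℝ) (hq0 : 0 < q) (hq1 : q < 1) (L : ℕ)
    (C : ℂ → ℂ → ℕ → Polynomial ℂ) (hC : IsUltra C) (n : ℕ) :
    (∀ i j : Fin (L + 1), (Pm (q : ℂ) L C n i j).degree ≤ (n : ℕ)) ∧
      (∀ i j : Fin (L + 1), (Pm (q : ℂ) L C n i j).coeff n = Gam (q : ℂ) L n i j) ∧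
      IsUnit (Gam (q : ℂ) L n).det := by
  have hq : (q : ℂ) ≠ 0 := by exact_mod_cast hq0.ne'
  have hP : ∀ m : ℕ, 0 < m → ((q : ℂ) ^ 2) ^ m ≠ 1 := by
    intro m hm h
    rw [← pow_mul] at h
    have h2 : q ^ (2 * m) = 1 := by exact_mod_cast h
    exact absurd h2 (pow_lt_one₀ hq0.le hq1 (by omega)).ne
  have z1 : ∀ i : Fin (L + 1), (q : ℂ) ^ (2 * ((i : ℕ) : ℤ) + 2) = ((q : ℂ) ^ 2) ^ ((i : ℕ) + 1) :=
    fun i => zpos _ _ _ (by push_cast; ring)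
  have z2 : ∀ i : Fin (L + 1), (q : ℂ) ^ (2 * (L : ℤ) - 2 * ((i : ℕ) : ℤ) + 2) =
      ((q : ℂ) ^ 2) ^ (L - (i : ℕ) + 1) :=
    fun i => zpos _ _ _ (by have := i.2; omega)
  have z3 : (q : ℂ) ^ (2 * (L : ℤ) + 4) = ((q : ℂ) ^ 2) ^ (L + 2) :=
    zpos _ _ _ (by push_cast; ring)
  refine ⟨fun i j => ?_, fun i j => ?_, ?_⟩
  · rw [Pm_eq]
    exact Polynomial.degree_le_of_natDegree_le
      (PP_degree C hC q hq hP L n i j (by have := j.2; omega))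
  · rw [Pm_eq, Gam]
    by_cases hij : i = j
    · subst hij
      rw [Matrix.diagonal_apply_eq, z1, z2, z3]
      have h := PP_diag C hC q hq hP (L - (i : ℕ)) n i
      rw [show (i : ℕ) + (L - (i : ℕ)) = L by have := i.2; omega] at h
      exact h
    · rw [Matrix.diagonal_apply_ne _ hij]
      exact PP_offdiag C hC q hq hP L n i j (by have := j.2; omega)
        (fun h => hij (Fin.ext h))
  · rw [Gam, Matrix.det_diagonal, isUnit_iff_ne_zero, Finset.prod_ne_zero_iff]
    intro i _
    rw [z1, z2, z3]
    have n0 := qpw_ne _ hP 1 n one_pos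
    rw [pow_one] at n0
    exact div_ne_zero (mul_ne_zero (mul_ne_zero (mul_ne_zero (by positivity) (pow_ne_zero _ hq))
      (qpw_ne _ hP _ n (by omega))) (qpw_ne _ hP _ n (by omega)))
      (mul_ne_zero n0 (qpw_ne _ hP _ n (by omega)))

end
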